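/- arXiv:1804.02614 — 2 statements merged into one kernel-verified Lean document; each statement's English description precedes it below -/
import Mathlib

section
/- Under the stated setup and assumptions, in both the spectral norm and the Frobenius norm one has max{‖sin∠(U_k,Û_k)‖, ‖sin∠(V_k,V̂_k)‖} ≤ (γ_k^{2q}/(1−γ_k)) · (‖Σ_⊥‖/σ_k) · ‖Ω_2Ω_1†‖₂, where ‖sin∠(M,N)‖ denotes the spectral (respectively Frobenius) norm of the diagonal matrix of sines of the canonical angles between the column spaces of M and N, i.e. max_j sin θ_j' (respectively (Σ_j sin² θ_j')^{1/2}). -/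
open scoped ENNReal
open Matrix

/-- The `j`-th largest singular value (0-indexed) of a complex matrix,
obtained as the decreasingly sorted square roots of the eigenvalues of `Mᴴ * M`. -/
noncomputable def sval {m n : ℕ} (M : Matrix (Fin m) (Fin n) ℂ) (j : ℕ) : ℝ :=
  (List.insertionSort (· ≥ ·)
    ((List.ofFn (Matrix.isHermitian_conjTranspose_mul_self M).eigenvalues).map Real.sqrt)).getD j 0

/-- The Schatten-`p` norm (`p = ∞` gives the spectral norm). -/
noncomputable def schatten {m n : ℕ} (p : ℝ≥0∞) (M : Matrix (Fin m) (Fin n) ℂ) : ℝ :=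
  if p = ⊤ then sval M 0
  else (∑ j ∈ Finset.range n, sval M j ^ p.toReal) ^ (1 / p.toReal)

/-- Moore–Penrose pseudoinverse of a full-row-rank matrix. -/
noncomputable def rpinv {a b : ℕ} (M : Matrix (Fin a) (Fin b) ℂ) : Matrix (Fin b) (Fin a) ℂ :=
  Mᴴ * (M * Mᴴ)⁻¹

/-- Rectangular diagonal matrix with entries `σ (off), σ (off+1), …` on the diagonal. -/
noncomputable def diagRect (σ : ℕ → ℝ) (off a b : ℕ) : Matrix (Fin a) (Fin b) ℂ :=
  Matrix.of fun i j => if (i : ℕ) = (j : ℕ) then (σ (off + (i : ℕ)) : ℂ) else 0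

/-- The first `b` columns of a matrix with `b + c` columns. -/
def colsL {a b c : ℕ} (M : Matrix (Fin a) (Fin (b + c)) ℂ) : Matrix (Fin a) (Fin b) ℂ :=
  M.submatrix id (Fin.castAdd c)

/-- The last `c` columns of a matrix with `b + c` columns. -/
def colsR {a b c : ℕ} (M : Matrix (Fin a) (Fin (b + c)) ℂ) : Matrix (Fin a) (Fin c) ℂ :=
  M.submatrix id (Fin.natAdd b)

section Norms

open scoped Matrix.Norms.L2Operator

variable {a b c : ℕ}

/-- The Frobenius norm, available side by side with the spectral norm. -/
noncomputable def frob (M : Matrix (Fin a) (Fin b) ℂ) : ℝ :=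
  letI : NormedAddCommGroup (Matrix (Fin a) (Fin b) ℂ) := Matrix.frobeniusNormedAddCommGroup
  ‖M‖

lemma frob_nonneg (M : Matrix (Fin a) (Fin b) ℂ) : 0 ≤ frob M :=
  letI : NormedAddCommGroup (Matrix (Fin a) (Fin b) ℂ) := Matrix.frobeniusNormedAddCommGroup
  norm_nonneg M

lemma frob_add_le (M N : Matrix (Fin a) (Fin b) ℂ) : frob (M + N) ≤ frob M + frob N :=
  letI : NormedAddCommGroup (Matrix (Fin a) (Fin b) ℂ) := Matrix.frobeniusNormedAddCommGroup
  norm_add_le M N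

lemma frob_conjTranspose (M : Matrix (Fin a) (Fin b) ℂ) : frob Mᴴ = frob M :=
  Matrix.frobenius_norm_conjTranspose M

lemma frob_sq (M : Matrix (Fin a) (Fin b) ℂ) :
    frob M ^ 2 = ∑ j, ‖WithLp.toLp 2 (M *ᵥ Pi.single j 1)‖ ^ 2 := by
  rw [frob, Matrix.frobenius_norm_def, ← Real.sqrt_eq_rpow, Real.sq_sqrt (by positivity),
    Finset.sum_comm]
  refine Finset.sum_congr rfl fun j _ => ?_
  rw [EuclideanSpace.norm_sq_eq]
  simp

lemma norm_toLp_mulVec_le (M : Matrix (Fin a) (Fin b) ℂ) (x : Fin b → ℂ) :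
    ‖WithLp.toLp 2 (M *ᵥ x)‖ ≤ ‖M‖ * ‖WithLp.toLp 2 x‖ :=
  Matrix.l2_opNorm_mulVec M (WithLp.toLp 2 x)

lemma l2_opNorm_le_of_forall {M : Matrix (Fin a) (Fin b) ℂ} {r : ℝ} (hr : 0 ≤ r)
    (h : ∀ x : Fin b → ℂ, ‖WithLp.toLp 2 (M *ᵥ x)‖ ≤ r * ‖WithLp.toLp 2 x‖) : ‖M‖ ≤ r := by
  rw [Matrix.l2_opNorm_def]
  exact ContinuousLinearMap.opNorm_le_bound _ hr fun x => h x.ofLp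

lemma norm_toLp_sq (x : Fin a → ℂ) : ‖WithLp.toLp 2 x‖ ^ 2 = (star x ⬝ᵥ x).re := by
  rw [EuclideanSpace.norm_sq_eq, dotProduct, Complex.re_sum]
  refine Finset.sum_congr rfl fun i _ => ?_
  simp [Complex.sq_norm, Complex.normSq_apply]

lemma norm_toLp_mulVec_sq (M : Matrix (Fin a) (Fin b) ℂ) (x : Fin b → ℂ) :
    ‖WithLp.toLp 2 (M *ᵥ x)‖ ^ 2 = (star x ⬝ᵥ ((Mᴴ * M) *ᵥ x)).re := by
  rw [norm_toLp_sq, star_mulVec, ← Matrix.dotProduct_mulVec, Matrix.mulVec_mulVec]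

lemma norm_toLp_mulVec_sq_add {d : ℕ} {M : Matrix (Fin a) (Fin b) ℂ}
    {N : Matrix (Fin c) (Fin b) ℂ} {L : Matrix (Fin d) (Fin b) ℂ}
    (h : Mᴴ * M = Nᴴ * N + Lᴴ * L) (x : Fin b → ℂ) :
    ‖WithLp.toLp 2 (M *ᵥ x)‖ ^ 2 =
      ‖WithLp.toLp 2 (N *ᵥ x)‖ ^ 2 + ‖WithLp.toLp 2 (L *ᵥ x)‖ ^ 2 := by
  simp only [norm_toLp_mulVec_sq, h, Matrix.add_mulVec, dotProduct_add, Complex.add_re]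

lemma norm_toLp_mulVec_of_isometry {M : Matrix (Fin a) (Fin b) ℂ} (h : Mᴴ * M = 1)
    (x : Fin b → ℂ) : ‖WithLp.toLp 2 (M *ᵥ x)‖ = ‖WithLp.toLp 2 x‖ := by
  rw [← sq_eq_sq₀ (norm_nonneg _) (norm_nonneg _), norm_toLp_mulVec_sq, h, norm_toLp_sq,
    Matrix.one_mulVec]

lemma l2_opNorm_le_one_of_isometry {M : Matrix (Fin a) (Fin b) ℂ} (h : Mᴴ * M = 1) : ‖M‖ ≤ 1 :=
  l2_opNorm_le_of_forall zero_le_one fun x => by rw [norm_toLp_mulVec_of_isometry h, one_mul]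

lemma l2_opNorm_le_one_of_projection {M : Matrix (Fin a) (Fin a) ℂ} (h : Mᴴ * M = M) : ‖M‖ ≤ 1 := by
  have h1 := Matrix.l2_opNorm_conjTranspose_mul_self M
  rw [h] at h1
  by_contra! h2
  nlinarith

lemma frob_mul_le_left (M : Matrix (Fin a) (Fin b) ℂ) (N : Matrix (Fin b) (Fin c) ℂ) :
    frob (M * N) ≤ ‖M‖ * frob N := by
  refine (sq_le_sq₀ (frob_nonneg _) (mul_nonneg (norm_nonneg _) (frob_nonneg _))).mp ?_
  rw [mul_pow, frob_sq, frob_sq, Finset.mul_sum]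
  refine Finset.sum_le_sum fun j _ => ?_
  rw [← mul_pow, ← Matrix.mulVec_mulVec]
  exact pow_le_pow_left₀ (norm_nonneg _) (norm_toLp_mulVec_le _ _) 2

lemma frob_mul_le_right (M : Matrix (Fin a) (Fin b) ℂ) (N : Matrix (Fin b) (Fin c) ℂ) :
    frob (M * N) ≤ frob M * ‖N‖ := by
  rw [← frob_conjTranspose, Matrix.conjTranspose_mul, mul_comm]
  refine (frob_mul_le_left _ _).trans_eq ?_
  rw [Matrix.l2_opNorm_conjTranspose, frob_conjTranspose]

lemma conjTranspose_diagonal_ofReal (d : Fin a → ℝ) :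
    (Matrix.diagonal fun i => (d i : ℂ))ᴴ = Matrix.diagonal fun i => (d i : ℂ) := by
  rw [Matrix.diagonal_conjTranspose]
  congr 1
  ext i
  simp

lemma diagonal_mul_diagonal_inv {d : Fin a → ℝ} {s : ℝ} (hs : 0 < s) (hd : ∀ i, s ≤ d i) :
    (Matrix.diagonal fun i => (d i : ℂ)) * (Matrix.diagonal fun i => ((d i)⁻¹ : ℂ)) = 1 := by
  rw [Matrix.diagonal_mul_diagonal, ← Matrix.diagonal_one]
  congr 1
  ext i
  exact mul_inv_cancel₀ (Complex.ofReal_ne_zero.mpr (hs.trans_le (hd i)).ne')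

lemma l2_opNorm_diagonal_inv_le {d : Fin a → ℝ} {s : ℝ} (hs : 0 < s) (hd : ∀ i, s ≤ d i) :
    ‖Matrix.diagonal fun i => ((d i)⁻¹ : ℂ)‖ ≤ s⁻¹ := by
  rw [Matrix.l2_opNorm_diagonal]
  refine (pi_norm_le_iff_of_nonneg (inv_nonneg.mpr hs.le)).mpr fun i => ?_
  rw [norm_inv, Complex.norm_real, Real.norm_of_nonneg (hs.le.trans (hd i))]
  exact inv_anti₀ hs (hd i)

/-- The properties of a matrix norm that the perturbation argument uses: it is a two-sided ideal
norm with respect to the spectral norm, and it is monotone in the comparison of the two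
residuals of an approximate singular subspace. -/
structure IsAngleNorm (N : ∀ {a b : ℕ}, Matrix (Fin a) (Fin b) ℂ → ℝ) : Prop where
  nonneg : ∀ {a b : ℕ} (M : Matrix (Fin a) (Fin b) ℂ), 0 ≤ N M
  add_le : ∀ {a b : ℕ} (M L : Matrix (Fin a) (Fin b) ℂ), N (M + L) ≤ N M + N L
  mul_le_left : ∀ {a b c : ℕ} (M : Matrix (Fin a) (Fin b) ℂ) (L : Matrix (Fin b) (Fin c) ℂ),
    N (M * L) ≤ ‖M‖ * N L
  mul_le_right : ∀ {a b c : ℕ} (M : Matrix (Fin a) (Fin b) ℂ) (L : Matrix (Fin b) (Fin c) ℂ),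
    N (M * L) ≤ N M * ‖L‖
  residual_le : ∀ {a b c : ℕ} (T : Matrix (Fin a) (Fin b) ℂ) (C : Matrix (Fin c) (Fin b) ℂ)
    (d : Fin b → ℝ) (s : ℝ), 0 < s → (∀ i, s ≤ d i) → ‖T‖ ≤ 1 →
    (∀ x : Fin b → ℂ, ‖WithLp.toLp 2 (C *ᵥ x)‖ ^ 2 ≤
      ‖WithLp.toLp 2 (((Matrix.diagonal fun i => (d i : ℂ)) * (Tᴴ * T)) *ᵥ x)‖ ^ 2 +
      s ^ 2 * (‖WithLp.toLp 2 (T *ᵥ x)‖ ^ 2 - ‖WithLp.toLp 2 ((Tᴴ * T) *ᵥ x)‖ ^ 2)) →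
    N C ≤ N (T * Matrix.diagonal fun i => (d i : ℂ))

lemma le_mul_of_sq_le_of_mul_le {r y n s t w x : ℝ} (hs : 0 ≤ s) (hy : 0 ≤ y) (hn : 0 ≤ n)
    (ht : 0 ≤ t) (hx : 0 ≤ x) (h : r ^ 2 ≤ y ^ 2 + s ^ 2 * (t ^ 2 - w ^ 2)) (hyt : y ≤ n * t)
    (hst : s * t ≤ n * x) (htw : t ^ 2 ≤ w * x) (htx : t ≤ x) : r ≤ n * x := by
  refine (abs_le_of_sq_le_sq' ?_ (mul_nonneg hn hx)).2
  have hyt2 : y ^ 2 ≤ (n * t) ^ 2 := pow_le_pow_left₀ hy hyt 2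
  rcases hx.eq_or_lt with rfl | hx
  · obtain rfl : t = 0 := le_antisymm htx ht
    nlinarith [sq_nonneg (s * w)]
  · have hst2 : (s * t) ^ 2 ≤ (n * x) ^ 2 := pow_le_pow_left₀ (mul_nonneg hs ht) hst 2
    have htw2 : (t ^ 2) ^ 2 ≤ (w * x) ^ 2 := pow_le_pow_left₀ (sq_nonneg t) htw 2
    have htx2 : 0 ≤ x ^ 2 - t ^ 2 := sub_nonneg.mpr (pow_le_pow_left₀ ht htx 2)
    refine le_of_mul_le_mul_right ?_ (pow_pos hx 2)
    calc r ^ 2 * x ^ 2 ≤ ((n * t) ^ 2 + s ^ 2 * (t ^ 2 - w ^ 2)) * x ^ 2 := by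
          gcongr; exact h.trans (by gcongr)
      _ = (n * t) ^ 2 * x ^ 2 + (s * t) ^ 2 * x ^ 2 - s ^ 2 * (w * x) ^ 2 := by ring
      _ ≤ (n * t) ^ 2 * x ^ 2 + (s * t) ^ 2 * x ^ 2 - s ^ 2 * (t ^ 2) ^ 2 := by gcongr
      _ = (n * t) ^ 2 * x ^ 2 + (s * t) ^ 2 * (x ^ 2 - t ^ 2) := by ring
      _ ≤ (n * t) ^ 2 * x ^ 2 + (n * x) ^ 2 * (x ^ 2 - t ^ 2) := by gcongr
      _ = (n * x) ^ 2 * x ^ 2 := by ring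

lemma isAngleNorm_l2_opNorm : IsAngleNorm fun M => ‖M‖ where
  nonneg := norm_nonneg
  add_le := norm_add_le
  mul_le_left := Matrix.l2_opNorm_mul
  mul_le_right := Matrix.l2_opNorm_mul
  residual_le T C d s hs hd hT h := by
    set D := Matrix.diagonal fun i => (d i : ℂ) with hD
    refine l2_opNorm_le_of_forall (norm_nonneg _) fun x => ?_
    have hx := h x
    have h1 : ‖WithLp.toLp 2 ((D * (Tᴴ * T)) *ᵥ x)‖ ≤ ‖T * D‖ * ‖WithLp.toLp 2 (T *ᵥ x)‖ := by
      have : D * (Tᴴ * T) = (T * D)ᴴ * T := by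
        rw [Matrix.conjTranspose_mul, hD, conjTranspose_diagonal_ofReal, Matrix.mul_assoc]
      rw [this, ← Matrix.mulVec_mulVec, ← Matrix.l2_opNorm_conjTranspose (T * D)]
      exact norm_toLp_mulVec_le _ _
    have h2 : s * ‖WithLp.toLp 2 (T *ᵥ x)‖ ≤ ‖T * D‖ * ‖WithLp.toLp 2 x‖ := by
      have hT' : ‖T‖ ≤ ‖T * D‖ * s⁻¹ := by
        calc ‖T‖ = ‖(T * D) * Matrix.diagonal fun i => ((d i)⁻¹ : ℂ)‖ := by
              rw [Matrix.mul_assoc, hD, diagonal_mul_diagonal_inv hs hd, Matrix.mul_one]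
          _ ≤ ‖T * D‖ * ‖Matrix.diagonal fun i => ((d i)⁻¹ : ℂ)‖ := Matrix.l2_opNorm_mul _ _
          _ ≤ _ := by gcongr; exact l2_opNorm_diagonal_inv_le hs hd
      have hT'' : s * ‖T‖ ≤ ‖T * D‖ := by
        calc s * ‖T‖ ≤ s * (‖T * D‖ * s⁻¹) := by gcongr
          _ = _ := by field_simp
      calc s * ‖WithLp.toLp 2 (T *ᵥ x)‖ ≤ s * (‖T‖ * ‖WithLp.toLp 2 x‖) := by
            gcongr; exact norm_toLp_mulVec_le _ _
        _ = (s * ‖T‖) * ‖WithLp.toLp 2 x‖ := by ring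
        _ ≤ _ := by gcongr
    have h3 : ‖WithLp.toLp 2 (T *ᵥ x)‖ ^ 2 ≤
        ‖WithLp.toLp 2 ((Tᴴ * T) *ᵥ x)‖ * ‖WithLp.toLp 2 x‖ := by
      rw [norm_toLp_mulVec_sq, dotProduct_comm]
      have := norm_inner_le_norm (𝕜 := ℂ) (WithLp.toLp 2 x) (WithLp.toLp 2 ((Tᴴ * T) *ᵥ x))
      rw [EuclideanSpace.inner_eq_star_dotProduct] at this
      exact (Complex.re_le_norm _).trans (this.trans_eq (mul_comm _ _))
    have h4 : ‖WithLp.toLp 2 (T *ᵥ x)‖ ≤ ‖WithLp.toLp 2 x‖ :=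
      (norm_toLp_mulVec_le T x).trans (mul_le_of_le_one_left (norm_nonneg _) hT)
    exact le_mul_of_sq_le_of_mul_le hs.le (norm_nonneg _) (norm_nonneg _) (norm_nonneg _)
      (norm_nonneg _) hx h1 h2 h3 h4

lemma isAngleNorm_frob : IsAngleNorm fun M => frob M where
  nonneg := frob_nonneg
  add_le := frob_add_le
  mul_le_left := frob_mul_le_left
  mul_le_right := frob_mul_le_right
  residual_le T C d s hs hd hT h := by
    have hD := conjTranspose_diagonal_ofReal d
    set D := Matrix.diagonal fun i => (d i : ℂ) with hDdef
    refine (sq_le_sq₀ (frob_nonneg _) (frob_nonneg _)).mp ?_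
    have h1 : frob C ^ 2 ≤ frob (D * (Tᴴ * T)) ^ 2 + ∑ j, s ^ 2 *
        (‖WithLp.toLp 2 (T *ᵥ Pi.single j 1)‖ ^ 2 -
          ‖WithLp.toLp 2 ((Tᴴ * T) *ᵥ Pi.single j 1)‖ ^ 2) := by
      rw [frob_sq, frob_sq, ← Finset.sum_add_distrib]
      exact Finset.sum_le_sum fun j _ => h _
    have h2 : frob (D * (Tᴴ * T)) = frob ((Tᴴ * T) * D) := by
      rw [← frob_conjTranspose]
      simp only [Matrix.conjTranspose_mul, hD, Matrix.conjTranspose_conjTranspose]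
    have hcol : ∀ {e : ℕ} (M : Matrix (Fin e) _ ℂ) j,
        ‖WithLp.toLp 2 ((M * D) *ᵥ Pi.single j 1)‖ ^ 2 =
          d j ^ 2 * ‖WithLp.toLp 2 (M *ᵥ Pi.single j 1)‖ ^ 2 := by
      intro e M j
      rw [← Matrix.mulVec_mulVec, hDdef, Matrix.diagonal_mulVec_single, mul_one,
        show (Pi.single j (d j : ℂ) : _ → ℂ) = (d j : ℂ) • Pi.single j 1 by
          rw [← Pi.single_smul]; simp,
        Matrix.mulVec_smul, WithLp.toLp_smul, norm_smul, mul_pow, Complex.norm_real,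
        Real.norm_eq_abs, sq_abs]
    refine h1.trans ?_
    rw [h2, frob_sq, frob_sq, ← Finset.sum_add_distrib]
    refine Finset.sum_le_sum fun j _ => ?_
    rw [hcol, hcol]
    have h3 : ‖WithLp.toLp 2 ((Tᴴ * T) *ᵥ Pi.single j 1)‖ ≤
        ‖WithLp.toLp 2 (T *ᵥ Pi.single j 1)‖ := by
      rw [← Matrix.mulVec_mulVec]
      refine (norm_toLp_mulVec_le _ _).trans (mul_le_of_le_one_left (norm_nonneg _) ?_)
      rwa [Matrix.l2_opNorm_conjTranspose]
    have h4 : s ^ 2 ≤ d j ^ 2 := pow_le_pow_left₀ hs.le (hd j) 2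
    have h5 := pow_le_pow_left₀ (norm_nonneg _) h3 2
    nlinarith

end Norms

section Svals

open scoped Matrix.Norms.L2Operator

variable {a b : ℕ}

lemma norm_eigenvalues_eq_sq (M : Matrix (Fin a) (Fin b) ℂ) :
    ‖(Matrix.isHermitian_conjTranspose_mul_self M).eigenvalues‖ = ‖M‖ ^ 2 := by
  have h := (Matrix.isHermitian_conjTranspose_mul_self M).spectral_theorem
  set hM := Matrix.isHermitian_conjTranspose_mul_self M
  rw [Unitary.conjStarAlgAut_apply] at h
  have h1 : ‖Mᴴ * M‖ = ‖Matrix.diagonal (RCLike.ofReal ∘ hM.eigenvalues : Fin b → ℂ)‖ := by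
    conv_lhs => rw [h]
    rw [← Unitary.coe_star, CStarRing.norm_mul_coe_unitary, CStarRing.norm_coe_unitary_mul]
  rw [Matrix.l2_opNorm_conjTranspose_mul_self, Matrix.l2_opNorm_diagonal] at h1
  rw [sq, h1]
  simp only [Pi.norm_def, Function.comp_apply]
  congr 2
  ext i
  simp

lemma sval_zero (M : Matrix (Fin a) (Fin b) ℂ) : sval M 0 = ‖M‖ := by
  have hnn := Matrix.eigenvalues_conjTranspose_mul_self_nonneg M
  have hnorm := norm_eigenvalues_eq_sq M
  unfold sval
  set e := (Matrix.isHermitian_conjTranspose_mul_self M).eigenvalues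
  set l := (List.ofFn e).map Real.sqrt with hl
  have hmem : ∀ x, x ∈ l.insertionSort (· ≥ ·) ↔ ∃ i, √(e i) = x := by
    intro x
    rw [List.mem_insertionSort, hl]
    simp
  have hsorted := List.pairwise_insertionSort (· ≥ ·) l
  rcases hs : l.insertionSort (· ≥ ·) with _ | ⟨x, xs⟩
  · have hb : IsEmpty (Fin b) := ⟨fun i => by
      have := (hmem _).mpr ⟨i, rfl⟩
      simp [hs] at this⟩
    have : ‖e‖ = 0 := by rw [Subsingleton.elim e 0, norm_zero]
    rw [this] at hnorm
    rw [(pow_eq_zero_iff two_ne_zero).mp hnorm.symm, List.getD_nil]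
  · rw [hs] at hmem hsorted
    obtain ⟨i, hi⟩ := (hmem x).mp (by simp)
    have hx : 0 ≤ x := hi ▸ Real.sqrt_nonneg _
    have hxi : e i = x ^ 2 := by rw [← hi, Real.sq_sqrt (hnn i)]
    rw [List.getD_cons_zero, ← sq_eq_sq₀ hx (norm_nonneg _), ← hnorm]
    refine le_antisymm ?_ ((pi_norm_le_iff_of_nonneg (sq_nonneg x)).mpr fun j => ?_)
    · rw [← hxi]
      exact (le_abs_self _).trans (norm_le_pi_norm e i)
    · rw [Real.norm_of_nonneg (hnn j), ← Real.sqrt_le_left hx]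
      rcases List.mem_cons.mp ((hmem _).mpr ⟨j, rfl⟩) with h | h
      · exact h.le
      · exact (List.pairwise_cons.mp hsorted).1 _ h

lemma frob_sq_eq_sum_eigenvalues (M : Matrix (Fin a) (Fin b) ℂ) :
    frob M ^ 2 = ∑ i, (Matrix.isHermitian_conjTranspose_mul_self M).eigenvalues i := by
  have h := (Matrix.isHermitian_conjTranspose_mul_self M).trace_eq_sum_eigenvalues
  have h' := congrArg Complex.re h
  rw [frob_sq]
  simp only [norm_toLp_mulVec_sq]
  simp only [Matrix.trace, Matrix.diag_apply, Complex.re_sum] at h'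
  simpa using h'

lemma sum_sval_sq (M : Matrix (Fin a) (Fin b) ℂ) :
    ∑ j ∈ Finset.range b, sval M j ^ 2 = frob M ^ 2 := by
  rw [frob_sq_eq_sum_eigenvalues]
  unfold sval
  have hnn := Matrix.eigenvalues_conjTranspose_mul_self_nonneg M
  set e := (Matrix.isHermitian_conjTranspose_mul_self M).eigenvalues
  set l := (List.ofFn e).map Real.sqrt with hl
  set l' := l.insertionSort (· ≥ ·) with hl'
  have hlen : l'.length = b := by simp [hl', hl]
  have hsum : ∑ j ∈ Finset.range b, l'.getD j 0 ^ 2 = (l'.map (· ^ 2)).sum := by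
    rw [← hlen, Finset.sum_range, ← List.sum_ofFn]
    congr 1
    refine List.ext_getElem (by simp) fun i h1 h2 => ?_
    simp at h1
    simp
  rw [hsum, ((List.perm_insertionSort (· ≥ ·) l).map _).sum_eq, hl, List.map_map, List.map_ofFn,
    List.sum_ofFn]
  exact Finset.sum_congr rfl fun i _ => Real.sq_sqrt (hnn i)

lemma schatten_top (M : Matrix (Fin a) (Fin b) ℂ) : schatten ⊤ M = ‖M‖ := by
  rw [schatten, if_pos rfl, sval_zero]

lemma schatten_two (M : Matrix (Fin a) (Fin b) ℂ) : schatten 2 M = frob M := by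
  rw [schatten, if_neg ENNReal.ofNat_ne_top, ENNReal.toReal_ofNat, ← Real.sqrt_eq_rpow]
  simp only [Real.rpow_ofNat]
  rw [sum_sval_sq, Real.sqrt_sq (frob_nonneg M)]

end Svals

section Blocks

open scoped Matrix.Norms.L2Operator

variable {a b c d e k : ℕ}

lemma mul_conjTranspose_eq_colsL_add_colsR (M : Matrix (Fin a) (Fin (b + c)) ℂ)
    (N : Matrix (Fin d) (Fin (b + c)) ℂ) :
    M * Nᴴ = colsL M * (colsL N)ᴴ + colsR M * (colsR N)ᴴ := by
  ext i j
  simp [Matrix.mul_apply, Fin.sum_univ_add, colsL, colsR]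

lemma colsL_mul (M : Matrix (Fin a) (Fin d) ℂ) (N : Matrix (Fin d) (Fin (b + c)) ℂ) :
    colsL (M * N) = M * colsL N := rfl

lemma colsR_mul (M : Matrix (Fin a) (Fin d) ℂ) (N : Matrix (Fin d) (Fin (b + c)) ℂ) :
    colsR (M * N) = M * colsR N := rfl

lemma diagRect_colsL (σ : ℕ → ℝ) (M : Matrix (Fin d) (Fin (k + a)) ℂ) :
    M * colsL (diagRect σ 0 (k + a) (k + b)) =
      colsL M * Matrix.diagonal fun i : Fin k => (σ i : ℂ) := by
  ext i j
  rw [Matrix.mul_diagonal, Matrix.mul_apply, Fin.sum_univ_add]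
  have h : ∀ x : Fin a, k + (x : ℕ) ≠ (j : ℕ) := fun x => by omega
  simp [colsL, diagRect, h, Fin.val_inj]

lemma diagRect_colsR (σ : ℕ → ℝ) (M : Matrix (Fin d) (Fin (k + a)) ℂ) :
    M * colsR (diagRect σ 0 (k + a) (k + b)) = colsR M * diagRect σ k a b := by
  ext i j
  simp only [Matrix.mul_apply, Fin.sum_univ_add]
  have h : ∀ x : Fin k, (x : ℕ) ≠ k + (j : ℕ) := fun x => by omega
  simp [colsR, diagRect, h]

/-- Splitting of a product `M Σ Nᴴ` into its leading and trailing diagonal blocks. -/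
lemma mul_diagRect_mul_conjTranspose (σ : ℕ → ℝ) (M : Matrix (Fin d) (Fin (k + a)) ℂ)
    (N : Matrix (Fin e) (Fin (k + b)) ℂ) :
    M * diagRect σ 0 (k + a) (k + b) * Nᴴ =
      colsL M * (Matrix.diagonal fun i : Fin k => (σ i : ℂ)) * (colsL N)ᴴ +
        colsR M * diagRect σ k a b * (colsR N)ᴴ := by
  rw [mul_conjTranspose_eq_colsL_add_colsR, colsL_mul, colsR_mul, diagRect_colsL, diagRect_colsR]

lemma colsL_isometry {M : Matrix (Fin a) (Fin (b + c)) ℂ} (h : Mᴴ * M = 1) :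
    (colsL M)ᴴ * colsL M = 1 := by
  ext i j
  have := congrFun (congrFun h (Fin.castAdd c i)) (Fin.castAdd c j)
  simpa [Matrix.mul_apply, colsL, Matrix.one_apply] using this

lemma colsR_isometry {M : Matrix (Fin a) (Fin (b + c)) ℂ} (h : Mᴴ * M = 1) :
    (colsR M)ᴴ * colsR M = 1 := by
  ext i j
  have := congrFun (congrFun h (Fin.natAdd b i)) (Fin.natAdd b j)
  simpa [Matrix.mul_apply, colsR, Matrix.one_apply] using this

lemma colsL_conjTranspose_mul_colsR {M : Matrix (Fin a) (Fin (b + c)) ℂ} (h : Mᴴ * M = 1) :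
    (colsL M)ᴴ * colsR M = 0 := by
  ext i j
  have := congrFun (congrFun h (Fin.castAdd c i)) (Fin.natAdd b j)
  rw [Matrix.one_apply_ne (by simp [Fin.ext_iff]; omega)] at this
  simpa [Matrix.mul_apply, colsL, colsR] using this

lemma colsR_conjTranspose_mul_colsL {M : Matrix (Fin a) (Fin (b + c)) ℂ} (h : Mᴴ * M = 1) :
    (colsR M)ᴴ * colsL M = 0 := by
  simpa using congrArg Matrix.conjTranspose (colsL_conjTranspose_mul_colsR h)

lemma l2_opNorm_diagRect_le {σ : ℕ → ℝ} (h0 : ∀ i, 0 ≤ σ i) (hm : ∀ i j, i ≤ j → σ j ≤ σ i)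
    (off a b : ℕ) : ‖diagRect σ off a b‖ ≤ σ off := by
  have h : (diagRect σ off a b)ᴴ * diagRect σ off a b =
      Matrix.diagonal fun j : Fin b => if (j : ℕ) < a then ((σ (off + j) : ℂ)) ^ 2 else 0 := by
    ext i j
    rw [Matrix.mul_apply, Matrix.diagonal_apply]
    simp only [diagRect, Matrix.conjTranspose_apply, Matrix.of_apply]
    split_ifs with hij hi
    · subst hij
      rw [Finset.sum_eq_single ⟨i, hi⟩]
      · simp [sq]
      · intro x _ hx
        have : (x : ℕ) ≠ i := fun h => hx (Fin.ext h)
        simp [this]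
      · simp
    · refine Finset.sum_eq_zero fun x _ => ?_
      have : (x : ℕ) ≠ i := by omega
      simp [this]
    · refine Finset.sum_eq_zero fun x _ => ?_
      by_cases h1 : (x : ℕ) = i
      · have : (x : ℕ) ≠ j := fun h => hij (Fin.ext (h1.symm.trans h))
        simp [this]
      · simp [h1]
  rw [← abs_of_nonneg (norm_nonneg (diagRect σ off a b))]
  refine abs_le_of_sq_le_sq ?_ (h0 off)
  rw [sq, ← Matrix.l2_opNorm_conjTranspose_mul_self, h, Matrix.l2_opNorm_diagonal]
  refine (pi_norm_le_iff_of_nonneg (sq_nonneg _)).mpr fun j => ?_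
  split_ifs
  · rw [norm_pow, Complex.norm_real, Real.norm_of_nonneg (h0 _)]
    exact pow_le_pow_left₀ (h0 _) (hm _ _ (Nat.le_add_right _ _)) 2
  · simpa using sq_nonneg (σ off)

end Blocks

section Perturbation

open scoped Matrix.Norms.L2Operator

variable {m n k m₂ n₂ ρ : ℕ}

/-- Comparison of the left and right residuals of the singular subspaces of `A` under an
orthogonal projection `P`. -/
lemma IsAngleNorm.right_residual_le {N : ∀ {a b : ℕ}, Matrix (Fin a) (Fin b) ℂ → ℝ}
    (hN : IsAngleNorm N)
    {A : Matrix (Fin m) (Fin n) ℂ} {Uk : Matrix (Fin m) (Fin k) ℂ} {Up : Matrix (Fin m) (Fin m₂) ℂ}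
    {Vk : Matrix (Fin n) (Fin k) ℂ} {Vp : Matrix (Fin n) (Fin n₂) ℂ}
    {d : Fin k → ℝ} {S : Matrix (Fin m₂) (Fin n₂) ℂ}
    (hUk : Ukᴴ * Uk = 1) (hU : Uk * Ukᴴ + Up * Upᴴ = 1)
    (hVk : Vkᴴ * Vk = 1) (hVp : Vpᴴ * Vp = 1) (hVkp : Vkᴴ * Vp = 0) (hVpk : Vpᴴ * Vk = 0)
    (hA : A = Uk * (Matrix.diagonal fun i => (d i : ℂ)) * Vkᴴ + Up * S * Vpᴴ)
    {P : Matrix (Fin m) (Fin m) ℂ} (hPh : Pᴴ = P) (hPP : P * P = P)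
    {s t : ℝ} (ht : 0 ≤ t) (hts : t < s) (hd : ∀ i, s ≤ d i) (hS : ‖S‖ ≤ t) :
    N (Aᴴ * ((1 - P) * Uk)) ≤ N ((1 - P) * Uk * Matrix.diagonal fun i => (d i : ℂ)) := by
  have hD := conjTranspose_diagonal_ofReal d
  set D := Matrix.diagonal fun i => (d i : ℂ)
  set T := (1 - P) * Uk with hT
  have hproj : (1 - P)ᴴ * (1 - P) = 1 - P := by
    simp [Matrix.sub_mul, Matrix.mul_sub, hPh, hPP]
  have hUT : Ukᴴ * T = Tᴴ * T := by
    rw [hT, Matrix.conjTranspose_mul, Matrix.mul_assoc, ← Matrix.mul_assoc (1 - P)ᴴ, hproj]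
  have hAA : A * Aᴴ = Uk * D * D * Ukᴴ + Up * S * Sᴴ * Upᴴ := by
    have e1 : ∀ Z : Matrix (Fin k) (Fin m) ℂ, Vkᴴ * (Vk * Z) = Z := fun Z => by
      rw [← Matrix.mul_assoc, hVk, Matrix.one_mul]
    have e2 : ∀ Z : Matrix (Fin n₂) (Fin m) ℂ, Vpᴴ * (Vp * Z) = Z := fun Z => by
      rw [← Matrix.mul_assoc, hVp, Matrix.one_mul]
    have e3 : ∀ Z : Matrix (Fin n₂) (Fin m) ℂ, Vkᴴ * (Vp * Z) = 0 := fun Z => by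
      rw [← Matrix.mul_assoc, hVkp, Matrix.zero_mul]
    have e4 : ∀ Z : Matrix (Fin k) (Fin m) ℂ, Vpᴴ * (Vk * Z) = 0 := fun Z => by
      rw [← Matrix.mul_assoc, hVpk, Matrix.zero_mul]
    rw [hA]
    simp only [Matrix.conjTranspose_add, Matrix.conjTranspose_mul, hD,
      Matrix.conjTranspose_conjTranspose, Matrix.add_mul, Matrix.mul_add, Matrix.mul_assoc, e1, e2,
      e3, e4, Matrix.mul_zero, add_zero, zero_add]
  have hpyth : (Aᴴ * T)ᴴ * (Aᴴ * T) =
      (D * (Tᴴ * T))ᴴ * (D * (Tᴴ * T)) + (Sᴴ * (Upᴴ * T))ᴴ * (Sᴴ * (Upᴴ * T)) := by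
    have : (Aᴴ * T)ᴴ * (Aᴴ * T) = Tᴴ * (A * Aᴴ) * T := by
      simp only [Matrix.conjTranspose_mul, Matrix.conjTranspose_conjTranspose, Matrix.mul_assoc]
    rw [this, hAA, ← hUT]
    simp only [Matrix.conjTranspose_mul, Matrix.conjTranspose_conjTranspose, Matrix.mul_assoc, hD,
      Matrix.add_mul, Matrix.mul_add]
  have hsplit : Tᴴ * T = (Tᴴ * T)ᴴ * (Tᴴ * T) + (Upᴴ * T)ᴴ * (Upᴴ * T) := by
    calc Tᴴ * T = Tᴴ * (Uk * Ukᴴ + Up * Upᴴ) * T := by rw [hU, Matrix.mul_one]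
      _ = (Ukᴴ * T)ᴴ * (Ukᴴ * T) + (Upᴴ * T)ᴴ * (Upᴴ * T) := by
          simp only [Matrix.conjTranspose_mul, Matrix.conjTranspose_conjTranspose,
            Matrix.mul_assoc, Matrix.add_mul, Matrix.mul_add]
      _ = _ := by rw [hUT]
  refine hN.residual_le T (Aᴴ * T) d s (ht.trans_lt hts) hd ?_ fun x => ?_
  · exact (Matrix.l2_opNorm_mul _ _).trans (mul_le_one₀ (l2_opNorm_le_one_of_projection hproj)
      (norm_nonneg _) (l2_opNorm_le_one_of_isometry hUk))
  · rw [norm_toLp_mulVec_sq_add hpyth x, norm_toLp_mulVec_sq_add hsplit x, add_sub_cancel_left,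
      ← mul_pow]
    gcongr
    rw [← Matrix.mulVec_mulVec]
    refine (norm_toLp_mulVec_le _ _).trans ?_
    gcongr
    rw [Matrix.l2_opNorm_conjTranspose]
    exact hS.trans hts.le

/-- A sine theorem of Wedin type for the compression `P * A` of `A` by an orthogonal projection:
both the left and the right canonical angles are controlled by the left residual. -/
lemma IsAngleNorm.sin_le {N : ∀ {a b : ℕ}, Matrix (Fin a) (Fin b) ℂ → ℝ} (hN : IsAngleNorm N)
    {A : Matrix (Fin m) (Fin n) ℂ} {Uk : Matrix (Fin m) (Fin k) ℂ} {Up : Matrix (Fin m) (Fin m₂) ℂ}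
    {Vk : Matrix (Fin n) (Fin k) ℂ} {Vp : Matrix (Fin n) (Fin n₂) ℂ}
    {d : Fin k → ℝ} {S : Matrix (Fin m₂) (Fin n₂) ℂ}
    (hUk : Ukᴴ * Uk = 1) (hUpk : Upᴴ * Uk = 0) (hU : Uk * Ukᴴ + Up * Upᴴ = 1)
    (hVk : Vkᴴ * Vk = 1) (hVp : Vpᴴ * Vp = 1) (hVkp : Vkᴴ * Vp = 0) (hVpk : Vpᴴ * Vk = 0)
    (hA : A = Uk * (Matrix.diagonal fun i => (d i : ℂ)) * Vkᴴ + Up * S * Vpᴴ)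
    {P : Matrix (Fin m) (Fin m) ℂ}
    {Uh : Matrix (Fin m) (Fin k) ℂ} {Um : Matrix (Fin m) (Fin ρ) ℂ}
    {Vh : Matrix (Fin n) (Fin k) ℂ} {Vm : Matrix (Fin n) (Fin ρ) ℂ}
    {d' : Fin k → ℝ} {S' : Matrix (Fin ρ) (Fin ρ) ℂ}
    (hP : P = Uh * Uhᴴ + Um * Umᴴ)
    (hUh : Uhᴴ * Uh = 1) (hUm : Umᴴ * Um = 1) (hUhm : Uhᴴ * Um = 0) (hUmh : Umᴴ * Uh = 0)
    (hVh : Vhᴴ * Vh = 1) (hVm : Vmᴴ * Vm = 1) (hVhm : Vhᴴ * Vm = 0) (hVmh : Vmᴴ * Vh = 0)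
    (hPA : P * A = Uh * (Matrix.diagonal fun i => (d' i : ℂ)) * Vhᴴ + Um * S' * Vmᴴ)
    {s t φ : ℝ} (ht : 0 ≤ t) (hts : t < s) (hd : ∀ i, s ≤ d i) (hS : ‖S‖ ≤ t) (hS' : ‖S'‖ ≤ t)
    (hφ : N ((1 - P) * A * Vk) ≤ φ) :
    max (N ((1 - Uh * Uhᴴ) * Uk)) (N ((1 - Vh * Vhᴴ) * Vk)) ≤ φ / (s - t) := by
  have hs : 0 < s := ht.trans_lt hts
  have hD := conjTranspose_diagonal_ofReal d
  have hD' := conjTranspose_diagonal_ofReal d'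
  have hDinv : ∀ {a : ℕ} (E : Matrix (Fin a) (Fin k) ℂ),
      s * N E ≤ N (E * Matrix.diagonal fun i => (d i : ℂ)) := by
    intro a E
    have h1 : N E ≤ N (E * Matrix.diagonal fun i => (d i : ℂ)) * s⁻¹ := by
      calc N E = N (E * (Matrix.diagonal fun i => (d i : ℂ)) *
              Matrix.diagonal fun i => ((d i)⁻¹ : ℂ)) := by
            rw [Matrix.mul_assoc, diagonal_mul_diagonal_inv hs hd, Matrix.mul_one]
        _ ≤ _ := hN.mul_le_right _ _
        _ ≤ _ := mul_le_mul_of_nonneg_left (l2_opNorm_diagonal_inv_le hs hd) (hN.nonneg _)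
    rw [← div_eq_mul_inv, le_div_iff₀ hs] at h1
    rwa [mul_comm]
  set D := Matrix.diagonal fun i => (d i : ℂ)
  set D' := Matrix.diagonal fun i => (d' i : ℂ)
  have hPh : Pᴴ = P := by simp [hP]
  have e1 : ∀ Z : Matrix (Fin k) (Fin m) ℂ, Uhᴴ * (Uh * Z) = Z := fun Z => by
    rw [← Matrix.mul_assoc, hUh, Matrix.one_mul]
  have e2 : ∀ Z : Matrix (Fin ρ) (Fin m) ℂ, Umᴴ * (Um * Z) = Z := fun Z => by
    rw [← Matrix.mul_assoc, hUm, Matrix.one_mul]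
  have e3 : ∀ Z : Matrix (Fin ρ) (Fin m) ℂ, Uhᴴ * (Um * Z) = 0 := fun Z => by
    rw [← Matrix.mul_assoc, hUhm, Matrix.zero_mul]
  have e4 : ∀ Z : Matrix (Fin k) (Fin m) ℂ, Umᴴ * (Uh * Z) = 0 := fun Z => by
    rw [← Matrix.mul_assoc, hUmh, Matrix.zero_mul]
  have hPP : P * P = P := by
    rw [hP]
    simp only [Matrix.add_mul, Matrix.mul_add, Matrix.mul_assoc, e1, e2, e3, e4, Matrix.mul_zero,
      add_zero, zero_add]
  have hAV : A * Vk = Uk * D := by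
    simp only [hA, Matrix.add_mul, Matrix.mul_assoc, hVk, hVpk, Matrix.mul_one, Matrix.mul_zero,
      add_zero]
  have hAU : Aᴴ * Uk = Vk * D := by
    simp only [hA, Matrix.conjTranspose_add, Matrix.conjTranspose_mul,
      Matrix.conjTranspose_conjTranspose, Matrix.add_mul, Matrix.mul_assoc, hUk, hUpk,
      Matrix.mul_one, Matrix.mul_zero, add_zero, hD]
  have hright : N (Aᴴ * ((1 - P) * Uk)) ≤ φ := by
    refine (hN.right_residual_le hUk hU hVk hVp hVkp hVpk hA hPh hPP ht hts hd hS).trans ?_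
    rwa [Matrix.mul_assoc, ← hAV, ← Matrix.mul_assoc]
  have hUmA : Umᴴ * A = S' * Vmᴴ := by
    have : Umᴴ * P = Umᴴ := by
      simp only [hP, Matrix.mul_add, ← Matrix.mul_assoc, hUm, hUmh, Matrix.zero_mul,
        Matrix.one_mul, zero_add]
    rw [← this, Matrix.mul_assoc, hPA]
    simp only [Matrix.mul_add, ← Matrix.mul_assoc, hUm, hUmh, Matrix.zero_mul, Matrix.one_mul,
      zero_add]
  set E := (1 - Uh * Uhᴴ) * Uk with hE
  set F := (1 - Vh * Vhᴴ) * Vk with hF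
  have hUmE : Umᴴ * E = Umᴴ * Uk := by
    simp only [hE, ← Matrix.mul_assoc, Matrix.mul_sub, hUmh, Matrix.zero_mul, Matrix.mul_one,
      sub_zero]
  have hVmF : Vmᴴ * F = Vmᴴ * Vk := by
    simp only [hF, ← Matrix.mul_assoc, Matrix.mul_sub, hVmh, Matrix.zero_mul, Matrix.mul_one,
      sub_zero]
  have hED : E * D = (1 - P) * A * Vk + Um * (S' * (Vmᴴ * F)) := by
    rw [hVmF, ← Matrix.mul_assoc S', ← hUmA, hE, Matrix.mul_assoc, ← hAV, hP]
    simp only [Matrix.sub_mul, Matrix.add_mul, Matrix.one_mul, Matrix.mul_assoc]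
    abel
  have hFD : F * D = (1 - Vh * Vhᴴ) * (Aᴴ * ((1 - P) * Uk)) + Vm * (S'ᴴ * (Umᴴ * E)) := by
    have hAP : Aᴴ * P = Vh * (D' * Uhᴴ) + Vm * (S'ᴴ * Umᴴ) := by
      have := congrArg Matrix.conjTranspose hPA
      simpa only [Matrix.conjTranspose_add, Matrix.conjTranspose_mul, hPh, hD',
        Matrix.conjTranspose_conjTranspose] using this
    have hkill : (1 - Vh * Vhᴴ) * (Aᴴ * P) = Vm * (S'ᴴ * Umᴴ) := by
      rw [hAP]
      simp only [Matrix.mul_add, ← Matrix.mul_assoc, Matrix.sub_mul, Matrix.one_mul]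
      simp only [Matrix.mul_assoc Vh Vhᴴ, hVh, hVhm, Matrix.mul_one, Matrix.mul_zero,
        Matrix.zero_mul, sub_self, sub_zero, zero_add]
    rw [hUmE, ← Matrix.mul_assoc S'ᴴ, ← Matrix.mul_assoc Vm, ← hkill, hF, Matrix.mul_assoc, ← hAU,
      Matrix.mul_assoc, ← Matrix.mul_add, Matrix.mul_assoc, ← Matrix.mul_add, ← Matrix.add_mul,
      sub_add_cancel, Matrix.one_mul]
  have hadj : ∀ {a b : ℕ} {M : Matrix (Fin a) (Fin b) ℂ}, Mᴴ * M = 1 → ‖Mᴴ‖ ≤ 1 := by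
    intro a b M hM
    rw [Matrix.l2_opNorm_conjTranspose]
    exact l2_opNorm_le_one_of_isometry hM
  have htriple : ∀ {a b c e : ℕ} (X : Matrix (Fin a) (Fin b) ℂ) (Y : Matrix (Fin b) (Fin c) ℂ)
      (Z : Matrix (Fin c) (Fin e) ℂ) (W : Matrix (Fin e) (Fin k) ℂ),
      ‖X‖ ≤ 1 → ‖Y‖ ≤ t → ‖Z‖ ≤ 1 → N (X * (Y * (Z * W))) ≤ t * N W := by
    intro a b c e X Y Z W hX hY hZ
    calc N (X * (Y * (Z * W))) ≤ ‖X‖ * N (Y * (Z * W)) := hN.mul_le_left _ _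
      _ ≤ N (Y * (Z * W)) := mul_le_of_le_one_left (hN.nonneg _) hX
      _ ≤ ‖Y‖ * N (Z * W) := hN.mul_le_left _ _
      _ ≤ t * N (Z * W) := mul_le_mul_of_nonneg_right hY (hN.nonneg _)
      _ ≤ t * N W := mul_le_mul_of_nonneg_left
          ((hN.mul_le_left _ _).trans (mul_le_of_le_one_left (hN.nonneg _) hZ)) ht
  have hprojV : (1 - Vh * Vhᴴ)ᴴ * (1 - Vh * Vhᴴ) = 1 - Vh * Vhᴴ := by
    have : Vh * Vhᴴ * (Vh * Vhᴴ) = Vh * Vhᴴ := by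
      rw [Matrix.mul_assoc, ← Matrix.mul_assoc Vhᴴ, hVh, Matrix.one_mul]
    simp [Matrix.sub_mul, Matrix.mul_sub, this]
  have hle1 : s * N E ≤ φ + t * N F := by
    refine (hDinv E).trans ?_
    rw [hED]
    exact (hN.add_le _ _).trans (add_le_add hφ
      (htriple _ _ _ _ (l2_opNorm_le_one_of_isometry hUm) hS' (hadj hVm)))
  have hle2 : s * N F ≤ φ + t * N E := by
    refine (hDinv F).trans ?_
    rw [hFD]
    refine (hN.add_le _ _).trans (add_le_add ?_
      (htriple _ _ _ _ (l2_opNorm_le_one_of_isometry hVm) ?_ (hadj hUm)))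
    · exact ((hN.mul_le_left _ _).trans (mul_le_of_le_one_left (hN.nonneg _)
        (l2_opNorm_le_one_of_projection hprojV))).trans hright
    · rwa [Matrix.l2_opNorm_conjTranspose]
  rw [le_div_iff₀ (sub_pos.mpr hts)]
  rcases le_total (N E) (N F) with h | h
  · rw [max_eq_right h]
    nlinarith
  · rw [max_eq_left h]
    nlinarith

end Perturbation

section Iteration

open scoped Matrix.Norms.L2Operator

variable {m n k m₂ n₂ ρ : ℕ}

lemma l2_opNorm_pow_le {M : Matrix (Fin k) (Fin k) ℂ} {r : ℝ} (h : ‖M‖ ≤ r) (q : ℕ) :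
    ‖M ^ q‖ ≤ r ^ q := by
  induction q with
  | zero => exact l2_opNorm_le_one_of_isometry (by simp)
  | succ q ih =>
    rw [pow_succ, pow_succ]
    exact (Matrix.l2_opNorm_mul _ _).trans
      (mul_le_mul ih h (norm_nonneg _) ((norm_nonneg _).trans ih))

lemma pow_mul_of_mul_eq {M : Matrix (Fin m) (Fin m) ℂ} {X : Matrix (Fin m) (Fin k) ℂ}
    {L : Matrix (Fin k) (Fin k) ℂ} (h : M * X = X * L) (q : ℕ) : M ^ q * X = X * L ^ q := by
  induction q with
  | zero => simp
  | succ q ih => rw [pow_succ, pow_succ', Matrix.mul_assoc, h, ← Matrix.mul_assoc, ih,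
      Matrix.mul_assoc, ← pow_succ, ← pow_succ']

open scoped ComplexOrder in
lemma mul_rpinv {M : Matrix (Fin m) (Fin n) ℂ} (h : M.rank = m) : M * rpinv M = 1 := by
  have hu : IsUnit (M * Mᴴ) := by
    rw [← Matrix.mulVec_surjective_iff_isUnit, ← Matrix.coe_mulVecLin, ← LinearMap.range_eq_top]
    refine Submodule.eq_top_of_finrank_eq ?_
    rw [← Matrix.rank, Matrix.rank_self_mul_conjTranspose, h, Module.finrank_fin_fun]
  rw [rpinv, ← Matrix.mul_assoc, Matrix.mul_nonsing_inv _ ((Matrix.isUnit_iff_isUnit_det _).mp hu)]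

/-- The left residual of the range of the subspace iteration. -/
lemma IsAngleNorm.iteration_residual_le {N : ∀ {a b : ℕ}, Matrix (Fin a) (Fin b) ℂ → ℝ}
    (hN : IsAngleNorm N)
    {A : Matrix (Fin m) (Fin n) ℂ} {Uk : Matrix (Fin m) (Fin k) ℂ} {Up : Matrix (Fin m) (Fin m₂) ℂ}
    {Vk : Matrix (Fin n) (Fin k) ℂ} {Vp : Matrix (Fin n) (Fin n₂) ℂ}
    {d : Fin k → ℝ} {S : Matrix (Fin m₂) (Fin n₂) ℂ}
    (hUk : Ukᴴ * Uk = 1) (hUp : Upᴴ * Up = 1) (hUkp : Ukᴴ * Up = 0) (hUpk : Upᴴ * Uk = 0)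
    (hVk : Vkᴴ * Vk = 1) (hVp : Vpᴴ * Vp = 1) (hVkp : Vkᴴ * Vp = 0) (hVpk : Vpᴴ * Vk = 0)
    (hA : A = Uk * (Matrix.diagonal fun i => (d i : ℂ)) * Vkᴴ + Up * S * Vpᴴ)
    {P : Matrix (Fin m) (Fin m) ℂ} (hPh : Pᴴ = P) (hPP : P * P = P)
    {s t : ℝ} (hs : 0 < s) (hd : ∀ i, s ≤ d i) (hS : ‖S‖ ≤ t)
    {Ω : Matrix (Fin n) (Fin ρ) ℂ} {W : Matrix (Fin ρ) (Fin k) ℂ} (hW : Vkᴴ * Ω * W = 1)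
    (q : ℕ) (hPY : P * ((A * Aᴴ) ^ q * A * Ω) = (A * Aᴴ) ^ q * A * Ω) :
    N ((1 - P) * A * Vk) ≤ (t / s) ^ (2 * q) * N S * ‖Vpᴴ * Ω * W‖ := by
  have hD := conjTranspose_diagonal_ofReal d
  have hDE := diagonal_mul_diagonal_inv hs hd
  have hEnorm := l2_opNorm_diagonal_inv_le hs hd
  set D := Matrix.diagonal fun i => (d i : ℂ)
  set E := Matrix.diagonal fun i => ((d i)⁻¹ : ℂ)
  have hED : E * D = 1 := mul_eq_one_comm.mp hDE
  have hAV : A * Vk = Uk * D := by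
    simp only [hA, Matrix.add_mul, Matrix.mul_assoc, hVk, hVpk, Matrix.mul_one, Matrix.mul_zero,
      add_zero]
  have hAVp : A * Vp = Up * S := by
    simp only [hA, Matrix.add_mul, Matrix.mul_assoc, hVp, hVkp, Matrix.mul_one, Matrix.mul_zero,
      zero_add]
  have hAU : Aᴴ * Uk = Vk * D := by
    simp only [hA, Matrix.conjTranspose_add, Matrix.conjTranspose_mul,
      Matrix.conjTranspose_conjTranspose, Matrix.add_mul, Matrix.mul_assoc, hUk, hUpk,
      Matrix.mul_one, Matrix.mul_zero, add_zero, hD]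
  have hAUp : Aᴴ * Up = Vp * Sᴴ := by
    simp only [hA, Matrix.conjTranspose_add, Matrix.conjTranspose_mul,
      Matrix.conjTranspose_conjTranspose, Matrix.add_mul, Matrix.mul_assoc, hUp, hUkp,
      Matrix.mul_one, Matrix.mul_zero, zero_add]
  have hUq : (A * Aᴴ) ^ q * Uk = Uk * (D * D) ^ q := pow_mul_of_mul_eq (by
    rw [Matrix.mul_assoc, hAU, ← Matrix.mul_assoc, hAV, Matrix.mul_assoc]) q
  have hUpq : (A * Aᴴ) ^ q * Up = Up * (S * Sᴴ) ^ q := pow_mul_of_mul_eq (by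
    rw [Matrix.mul_assoc, hAUp, ← Matrix.mul_assoc, hAVp, Matrix.mul_assoc]) q
  have hDq : (D * D) ^ q * D * (E * E) ^ q = D := by
    have h1 : Commute D E := hDE.trans hED.symm
    have h2 : (D * D) * (E * E) = 1 := by
      rw [Matrix.mul_assoc, ← Matrix.mul_assoc D E, hDE, Matrix.one_mul, hDE]
    have h3 : Commute (D * D) (E * E) :=
      Commute.mul_left (h1.mul_right h1) (h1.mul_right h1)
    have h4 : Commute D (D * D) := (Commute.refl D).mul_right (Commute.refl D)
    rw [← (h4.pow_right q).eq, Matrix.mul_assoc, ← h3.mul_pow, h2, one_pow, Matrix.mul_one]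
  have hY : (A * Aᴴ) ^ q * A * Ω * W * (E * E) ^ q =
      A * Vk + Up * ((S * Sᴴ) ^ q * (S * (Vpᴴ * Ω * W * (E * E) ^ q))) := by
    calc (A * Aᴴ) ^ q * A * Ω * W * (E * E) ^ q
        = ((A * Aᴴ) ^ q * Uk) * D * (Vkᴴ * Ω * W) * (E * E) ^ q +
          ((A * Aᴴ) ^ q * Up) * (S * (Vpᴴ * Ω * W * (E * E) ^ q)) := by
          generalize (A * Aᴴ) ^ q = M
          rw [hA]
          simp only [Matrix.add_mul, Matrix.mul_add, Matrix.mul_assoc]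
      _ = _ := by
          rw [hUq, hUpq, hW, Matrix.mul_one, hAV, Matrix.mul_assoc Uk, Matrix.mul_assoc Uk, hDq,
            Matrix.mul_assoc Up]
  have hres : (1 - P) * A * Vk =
      -(1 - P) * (Up * ((S * Sᴴ) ^ q * (S * (Vpᴴ * Ω * W * (E * E) ^ q)))) := by
    have h0 : (1 - P) * ((A * Aᴴ) ^ q * A * Ω * W * (E * E) ^ q) = 0 := by
      rw [Matrix.mul_assoc _ W, ← Matrix.mul_assoc, Matrix.sub_mul, hPY, Matrix.one_mul, sub_self,
        Matrix.zero_mul]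
    rw [hY, Matrix.mul_add] at h0
    rw [Matrix.mul_assoc, Matrix.neg_mul]
    exact eq_neg_of_add_eq_zero_left h0
  have hproj : (1 - P)ᴴ * (1 - P) = 1 - P := by
    simp [Matrix.sub_mul, Matrix.mul_sub, hPh, hPP]
  have hneg : ‖-(1 - P)‖ ≤ 1 := by
    rw [norm_neg]
    exact l2_opNorm_le_one_of_projection hproj
  have ht : 0 ≤ t := (norm_nonneg _).trans hS
  have hSq : ‖(S * Sᴴ) ^ q‖ ≤ (t * t) ^ q := by
    refine l2_opNorm_pow_le ((Matrix.l2_opNorm_mul _ _).trans ?_) q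
    rw [Matrix.l2_opNorm_conjTranspose]
    exact mul_le_mul hS hS (norm_nonneg _) ht
  have hEq : ‖(E * E) ^ q‖ ≤ (s⁻¹ * s⁻¹) ^ q :=
    l2_opNorm_pow_le ((Matrix.l2_opNorm_mul _ _).trans
      (mul_le_mul hEnorm hEnorm (norm_nonneg _) (inv_nonneg.mpr hs.le))) q
  have hNS := hN.nonneg S
  have hright : N (S * (Vpᴴ * Ω * W * (E * E) ^ q)) ≤
      N S * (‖Vpᴴ * Ω * W‖ * (s⁻¹ * s⁻¹) ^ q) := by
    refine (hN.mul_le_right _ _).trans (mul_le_mul_of_nonneg_left ?_ hNS)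
    exact (Matrix.l2_opNorm_mul _ _).trans (mul_le_mul_of_nonneg_left hEq (norm_nonneg _))
  calc N ((1 - P) * A * Vk)
      ≤ N (Up * ((S * Sᴴ) ^ q * (S * (Vpᴴ * Ω * W * (E * E) ^ q)))) := by
        rw [hres]
        exact (hN.mul_le_left _ _).trans (mul_le_of_le_one_left (hN.nonneg _) hneg)
    _ ≤ N ((S * Sᴴ) ^ q * (S * (Vpᴴ * Ω * W * (E * E) ^ q))) :=
        (hN.mul_le_left _ _).trans
          (mul_le_of_le_one_left (hN.nonneg _) (l2_opNorm_le_one_of_isometry hUp))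
    _ ≤ (t * t) ^ q * (N S * (‖Vpᴴ * Ω * W‖ * (s⁻¹ * s⁻¹) ^ q)) :=
        (hN.mul_le_left _ _).trans (mul_le_mul hSq hright (hN.nonneg _) (by positivity))
    _ = (t / s) ^ (2 * q) * N S * ‖Vpᴴ * Ω * W‖ := by
        rw [pow_mul, div_pow, ← sq, ← sq, div_eq_mul_inv, mul_pow (t ^ 2), inv_pow]
        ring

/-- The singular values of a compression are dominated by those of the matrix. -/
lemma sval_compression_le {A : Matrix (Fin m) (Fin n) ℂ} {Uk : Matrix (Fin m) (Fin k) ℂ}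
    {Up : Matrix (Fin m) (Fin m₂) ℂ} {Vk : Matrix (Fin n) (Fin k) ℂ}
    {Vp : Matrix (Fin n) (Fin n₂) ℂ} {D : Matrix (Fin k) (Fin k) ℂ}
    {S : Matrix (Fin m₂) (Fin n₂) ℂ} (hUp : Upᴴ * Up = 1) (hVp : Vpᴴ * Vp = 1)
    (hA : A = Uk * D * Vkᴴ + Up * S * Vpᴴ) {t : ℝ} (hS : ‖S‖ ≤ t)
    {r : ℕ} {Q : Matrix (Fin m) (Fin (k + (r + 1))) ℂ} (hQ : Qᴴ * Q = 1)
    {UB : Matrix (Fin (k + (r + 1))) (Fin (k + (r + 1))) ℂ}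
    {Vh : Matrix (Fin n) (Fin (k + (r + 1))) ℂ} {σh : ℕ → ℝ}
    (hUB : UBᴴ * UB = 1) (hVh : Vhᴴ * Vh = 1)
    (hσh0 : ∀ i, 0 ≤ σh i) (hσhm : ∀ i j, i ≤ j → σh j ≤ σh i)
    (hB : Qᴴ * A = UB * diagRect σh 0 (k + (r + 1)) (k + (r + 1)) * Vhᴴ) : σh k ≤ t := by
  let f : (Fin (k + (r + 1)) → ℂ) →ₗ[ℂ] (Fin k → ℂ) × (Fin r → ℂ) :=
    (Matrix.mulVecLin (Vkᴴ * Vh)).prod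
      (LinearMap.funLeft ℂ ℂ fun i : Fin r => Fin.natAdd k i.succ)
  obtain ⟨c, hc, hc0⟩ := (LinearMap.ker f).exists_mem_ne_zero_of_ne_bot
    (LinearMap.ker_ne_bot_of_finrank_lt (by simp))
  have hcV : (Vkᴴ * Vh) *ᵥ c = 0 := congrArg Prod.fst (LinearMap.mem_ker.mp hc)
  have hcr : ∀ i : Fin r, c (Fin.natAdd k i.succ) = 0 := fun i =>
    congrFun (congrArg Prod.snd (LinearMap.mem_ker.mp hc)) i
  have hczero : ∀ i : Fin (k + (r + 1)), k < (i : ℕ) → c i = 0 := by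
    intro i hi
    have : i = Fin.natAdd k (Fin.succ ⟨i - k - 1, by omega⟩) := by
      ext
      simp
      omega
    rw [this]
    exact hcr _
  have hdiag : diagRect σh 0 (k + (r + 1)) (k + (r + 1)) *ᵥ c =
      fun i : Fin (k + (r + 1)) => (σh i : ℂ) * c i := by
    ext i
    simp [Matrix.mulVec, dotProduct, diagRect, Fin.val_inj]
  have hlower : σh k * ‖WithLp.toLp 2 c‖ ≤ ‖WithLp.toLp 2 ((Qᴴ * A) *ᵥ (Vh *ᵥ c))‖ := by
    rw [Matrix.mulVec_mulVec, hB, Matrix.mul_assoc, hVh, Matrix.mul_one, ← Matrix.mulVec_mulVec,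
      norm_toLp_mulVec_of_isometry hUB, hdiag]
    refine (sq_le_sq₀ (mul_nonneg (hσh0 k) (norm_nonneg _)) (norm_nonneg _)).mp ?_
    rw [mul_pow, EuclideanSpace.norm_sq_eq, EuclideanSpace.norm_sq_eq, Finset.mul_sum]
    refine Finset.sum_le_sum fun i _ => ?_
    rcases le_or_gt (i : ℕ) k with hi | hi
    · simp only [norm_mul, mul_pow, Complex.norm_real, Real.norm_eq_abs, sq_abs]
      gcongr
      · exact hσh0 k
      · exact hσhm _ _ hi
    · simp [hczero i hi]
  have hupper : ‖WithLp.toLp 2 ((Qᴴ * A) *ᵥ (Vh *ᵥ c))‖ ≤ t * ‖WithLp.toLp 2 c‖ := by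
    have hAx : (Qᴴ * A) *ᵥ (Vh *ᵥ c) = (Qᴴ * (Up * (S * Vpᴴ))) *ᵥ (Vh *ᵥ c) := by
      rw [hA, Matrix.mul_add, Matrix.add_mulVec]
      have : (Qᴴ * (Uk * D * Vkᴴ)) *ᵥ (Vh *ᵥ c) = 0 := by
        rw [Matrix.mulVec_mulVec, ← Matrix.mul_assoc, Matrix.mul_assoc _ Vkᴴ,
          ← Matrix.mulVec_mulVec, hcV, Matrix.mulVec_zero]
      rw [this, zero_add, Matrix.mul_assoc Up]
    have hnorm : ‖Qᴴ * (Up * (S * Vpᴴ))‖ ≤ t := by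
      have h1 : ‖Qᴴ‖ ≤ 1 := by
        rw [Matrix.l2_opNorm_conjTranspose]
        exact l2_opNorm_le_one_of_isometry hQ
      have h2 : ‖Vpᴴ‖ ≤ 1 := by
        rw [Matrix.l2_opNorm_conjTranspose]
        exact l2_opNorm_le_one_of_isometry hVp
      calc _ ≤ ‖Up * (S * Vpᴴ)‖ :=
            (Matrix.l2_opNorm_mul _ _).trans (mul_le_of_le_one_left (norm_nonneg _) h1)
        _ ≤ ‖S * Vpᴴ‖ := (Matrix.l2_opNorm_mul _ _).trans
            (mul_le_of_le_one_left (norm_nonneg _) (l2_opNorm_le_one_of_isometry hUp))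
        _ ≤ ‖S‖ := (Matrix.l2_opNorm_mul _ _).trans (mul_le_of_le_one_right (norm_nonneg _) h2)
        _ ≤ t := hS
    rw [hAx, ← norm_toLp_mulVec_of_isometry hVh c]
    exact (norm_toLp_mulVec_le _ _).trans (mul_le_mul_of_nonneg_right hnorm (norm_nonneg _))
  refine le_of_mul_le_mul_right (hlower.trans hupper) (norm_pos_iff.mpr ?_)
  simpa using hc0

end Iteration

/-- Theorem 3.5 (spectral and Frobenius norms): accuracy of the extracted
rank-k singular subspaces, without the factor `√2`. -/
theorem spectral_frobenius_angles_truncated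
    {k m₂ n₂ ρ : ℕ} (q : ℕ) (hk : 1 ≤ k)
    (A : Matrix (Fin (k + m₂)) (Fin (k + n₂)) ℂ)
    (U : Matrix (Fin (k + m₂)) (Fin (k + m₂)) ℂ)
    (V : Matrix (Fin (k + n₂)) (Fin (k + n₂)) ℂ)
    (σ : ℕ → ℝ)
    (hU : Uᴴ * U = 1) (hU' : U * Uᴴ = 1)
    (hV : Vᴴ * V = 1) (hV' : V * Vᴴ = 1)
    (hσ0 : ∀ i, 0 ≤ σ i) (hσm : ∀ i j, i ≤ j → σ j ≤ σ i)
    (hA : A = U * diagRect σ 0 (k + m₂) (k + n₂) * Vᴴ)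
    (hrank : 0 < σ (k - 1)) (hgap : σ k < σ (k - 1))
    (Ω : Matrix (Fin (k + n₂)) (Fin (k + ρ)) ℂ)
    (hΩ : ((colsL V)ᴴ * Ω).rank = k)
    (Q : Matrix (Fin (k + m₂)) (Fin (k + ρ)) ℂ)
    (R : Matrix (Fin (k + ρ)) (Fin (k + ρ)) ℂ)
    (hQ : Qᴴ * Q = 1) (hR : R.BlockTriangular id)
    (hQR : (A * Aᴴ) ^ q * A * Ω = Q * R)
    (UB : Matrix (Fin (k + ρ)) (Fin (k + ρ)) ℂ)
    (Vh : Matrix (Fin (k + n₂)) (Fin (k + ρ)) ℂ)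
    (σh : ℕ → ℝ)
    (hUB : UBᴴ * UB = 1) (hUB' : UB * UBᴴ = 1)
    (hVh : Vhᴴ * Vh = 1)
    (hσh0 : ∀ i, 0 ≤ σh i) (hσhm : ∀ i j, i ≤ j → σh j ≤ σh i)
    (hB : Qᴴ * A = UB * diagRect σh 0 (k + ρ) (k + ρ) * Vhᴴ)
    :
    ∀ p ∈ ({2, ⊤} : Set ℝ≥0∞),
      max (schatten p ((1 - colsL (Q * UB) * (colsL (Q * UB))ᴴ) * colsL U)) (schatten p ((1 - colsL Vh * (colsL Vh)ᴴ) * colsL V)) ≤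
        ((σ k / σ (k - 1)) ^ (2 * q) / (1 - (σ k / σ (k - 1)))) *
          (schatten p (diagRect σ k m₂ n₂) / σ (k - 1)) * sval ((colsR V)ᴴ * Ω * rpinv ((colsL V)ᴴ * Ω)) 0 := by
  open scoped Matrix.Norms.L2Operator in
  have hUk := colsL_isometry hU
  have hUp := colsR_isometry hU
  have hUkp := colsL_conjTranspose_mul_colsR hU
  have hUpk := colsR_conjTranspose_mul_colsL hU
  have hVk := colsL_isometry hV
  have hVp := colsR_isometry hV
  have hVkp := colsL_conjTranspose_mul_colsR hV
  have hVpk := colsR_conjTranspose_mul_colsL hV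
  have hU1 := (mul_conjTranspose_eq_colsL_add_colsR U U).symm.trans hU'
  have hA2 := hA.trans (mul_diagRect_mul_conjTranspose σ U V)
  have hS := l2_opNorm_diagRect_le hσ0 hσm k m₂ n₂
  have hd : ∀ i : Fin k, σ (k - 1) ≤ σ i := fun i => hσm _ _ (by omega)
  have hQUB : (Q * UB)ᴴ * (Q * UB) = 1 := by
    rw [Matrix.conjTranspose_mul, Matrix.mul_assoc, ← Matrix.mul_assoc Qᴴ, hQ, Matrix.one_mul, hUB]
  have hP : Q * Qᴴ = colsL (Q * UB) * (colsL (Q * UB))ᴴ + colsR (Q * UB) * (colsR (Q * UB))ᴴ := by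
    rw [← mul_conjTranspose_eq_colsL_add_colsR, Matrix.conjTranspose_mul, Matrix.mul_assoc,
      ← Matrix.mul_assoc UB, hUB', Matrix.one_mul]
  have hPh : (Q * Qᴴ)ᴴ = Q * Qᴴ := by simp
  have hPP : Q * Qᴴ * (Q * Qᴴ) = Q * Qᴴ := by
    rw [Matrix.mul_assoc, ← Matrix.mul_assoc Qᴴ, hQ, Matrix.one_mul]
  have hPA : Q * Qᴴ * A =
      colsL (Q * UB) * (Matrix.diagonal fun i : Fin k => (σh i : ℂ)) * (colsL Vh)ᴴ +
        colsR (Q * UB) * diagRect σh k ρ ρ * (colsR Vh)ᴴ := by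
    rw [Matrix.mul_assoc, hB, ← Matrix.mul_assoc, ← Matrix.mul_assoc,
      mul_diagRect_mul_conjTranspose σh (Q * UB) Vh]
  have hPY : Q * Qᴴ * ((A * Aᴴ) ^ q * A * Ω) = (A * Aᴴ) ^ q * A * Ω := by
    rw [hQR, Matrix.mul_assoc, ← Matrix.mul_assoc Qᴴ, hQ, Matrix.one_mul]
  have hS' : ‖diagRect σh k ρ ρ‖ ≤ σ k := by
    rcases ρ with _ | r
    · rw [Subsingleton.elim (diagRect σh k 0 0) 0, norm_zero]
      exact hσ0 k
    · exact (l2_opNorm_diagRect_le hσh0 hσhm k _ _).trans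
        (sval_compression_le hUp hVp hA2 hS hQ hUB hVh hσh0 hσhm hB)
  have key : ∀ {N : ∀ {a b : ℕ}, Matrix (Fin a) (Fin b) ℂ → ℝ}, IsAngleNorm N →
      max (N ((1 - colsL (Q * UB) * (colsL (Q * UB))ᴴ) * colsL U))
        (N ((1 - colsL Vh * (colsL Vh)ᴴ) * colsL V)) ≤
      ((σ k / σ (k - 1)) ^ (2 * q) / (1 - (σ k / σ (k - 1)))) *
        (N (diagRect σ k m₂ n₂) / σ (k - 1)) *
          ‖(colsR V)ᴴ * Ω * rpinv ((colsL V)ᴴ * Ω)‖ := by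
    intro N hN
    refine (hN.sin_le hUk hUpk hU1 hVk hVp hVkp hVpk hA2 hP (colsL_isometry hQUB)
      (colsR_isometry hQUB) (colsL_conjTranspose_mul_colsR hQUB)
      (colsR_conjTranspose_mul_colsL hQUB) (colsL_isometry hVh) (colsR_isometry hVh)
      (colsL_conjTranspose_mul_colsR hVh) (colsR_conjTranspose_mul_colsL hVh) hPA (hσ0 k) hgap hd
      hS hS' (hN.iteration_residual_le hUk hUp hUkp hUpk hVk hVp hVkp hVpk hA2 hPh hPP hrank hd hS
        (mul_rpinv hΩ) q hPY)).trans_eq ?_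
    have h1 : σ (k - 1) - σ k ≠ 0 := (sub_pos.mpr hgap).ne'
    have h2 : 1 - σ k / σ (k - 1) = (σ (k - 1) - σ k) / σ (k - 1) := by
      rw [sub_div, div_self hrank.ne']
    rw [h2]
    field_simp
  rintro p (rfl | rfl)
  · simp only [schatten_two, sval_zero]
    exact key isAngleNorm_frob
  · simp only [schatten_top, sval_zero]
    exact key isAngleNorm_l2_opNorm
end

section
/- Under the stated setup and assumptions, for every j = 1,…,k the angle between the exact singular vector and the corresponding approximate singular subspace satisfies sin∠(u_j, Û) ≤ γ_j^{2q+1}·‖Ω_2Ω_1†‖₂ and sin∠(v_j, V̂) ≤ γ_j^{2q+2}·‖Ω_2Ω_1†‖₂, where u_j and v_j are the j-th columns of U_k and V_k, and sin∠(x, M) = ‖(I − MM*)x‖₂ for a unit vector x and a matrix M with orthonormal columns. -/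
open scoped ENNReal
open Matrix

/-- Euclidean norm of a complex vector. -/
noncomputable def vnorm {a : ℕ} (w : Fin a → ℂ) : ℝ :=
  Real.sqrt (∑ i, ‖w i‖ ^ 2)

/-- `vnorm` is the norm of `EuclideanSpace`. -/
theorem vnorm_eq_norm_toLp {a : ℕ} (w : Fin a → ℂ) : vnorm w = ‖WithLp.toLp 2 w‖ := by
  rw [EuclideanSpace.norm_eq]; rfl

theorem vnorm_nonneg {a : ℕ} (w : Fin a → ℂ) : 0 ≤ vnorm w := Real.sqrt_nonneg _

theorem vnorm_sq {a : ℕ} (w : Fin a → ℂ) : vnorm w ^ 2 = ∑ i, ‖w i‖ ^ 2 :=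
  Real.sq_sqrt (Finset.sum_nonneg fun _ _ => sq_nonneg _)

theorem ofReal_vnorm_sq {a : ℕ} (w : Fin a → ℂ) : ((vnorm w ^ 2 : ℝ) : ℂ) = star w ⬝ᵥ w := by
  simp [vnorm_sq, dotProduct, RCLike.conj_mul]

theorem vnorm_smul {a : ℕ} (c : ℂ) (w : Fin a → ℂ) : vnorm (c • w) = ‖c‖ * vnorm w := by
  rw [vnorm_eq_norm_toLp, vnorm_eq_norm_toLp, WithLp.toLp_smul, norm_smul]

/-- A matrix with orthonormal columns preserves the Euclidean norm. -/
theorem vnorm_mulVec_of_conjTranspose_mul_self {a b : ℕ} {P : Matrix (Fin a) (Fin b) ℂ}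
    (hP : Pᴴ * P = 1) (x : Fin b → ℂ) : vnorm (P *ᵥ x) = vnorm x := by
  have h : ((vnorm (P *ᵥ x) ^ 2 : ℝ) : ℂ) = ((vnorm x ^ 2 : ℝ) : ℂ) := by
    rw [ofReal_vnorm_sq, ofReal_vnorm_sq, star_mulVec, ← dotProduct_mulVec, mulVec_mulVec, hP,
      one_mulVec]
  exact (sq_eq_sq₀ (vnorm_nonneg _) (vnorm_nonneg _)).1 (Complex.ofReal_injective h)

/-- The orthogonal projection onto the complement of the range of `P` is a contraction. -/
theorem vnorm_sub_projection_le {a b : ℕ} {P : Matrix (Fin a) (Fin b) ℂ}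
    (hP : Pᴴ * P = 1) (x : Fin a → ℂ) : vnorm ((1 - P * Pᴴ) *ᵥ x) ≤ vnorm x := by
  have hidem : (1 - P * Pᴴ)ᴴ * (1 - P * Pᴴ) = 1 - P * Pᴴ := by
    have h : P * Pᴴ * (P * Pᴴ) = P * Pᴴ := by
      rw [Matrix.mul_assoc, ← Matrix.mul_assoc Pᴴ, hP, Matrix.one_mul]
    simp [Matrix.mul_sub, Matrix.sub_mul, h]
  have h : ((vnorm ((1 - P * Pᴴ) *ᵥ x) ^ 2 : ℝ) : ℂ)
      = ((vnorm x ^ 2 - vnorm (Pᴴ *ᵥ x) ^ 2 : ℝ) : ℂ) := by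
    rw [Complex.ofReal_sub, ofReal_vnorm_sq, ofReal_vnorm_sq, ofReal_vnorm_sq, star_mulVec,
      ← dotProduct_mulVec, mulVec_mulVec, hidem, star_mulVec, ← dotProduct_mulVec, mulVec_mulVec,
      conjTranspose_conjTranspose, sub_mulVec, one_mulVec, dotProduct_sub]
  have h' := Complex.ofReal_injective h
  exact (sq_le_sq₀ (vnorm_nonneg _) (vnorm_nonneg _)).1
    (by linarith [sq_nonneg (vnorm (Pᴴ *ᵥ x))])

/-- The distance from `x` to the range of `P` is at most the distance to any of its points. -/
theorem vnorm_sub_projection_le_sub {a b : ℕ} {P : Matrix (Fin a) (Fin b) ℂ}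
    (hP : Pᴴ * P = 1) (x : Fin a → ℂ) (y : Fin b → ℂ) :
    vnorm ((1 - P * Pᴴ) *ᵥ x) ≤ vnorm (P *ᵥ y - x) := by
  have h0 : (1 - P * Pᴴ) * P = 0 := by
    rw [Matrix.sub_mul, Matrix.mul_assoc, hP, Matrix.one_mul, Matrix.mul_one, sub_self]
  have h : (1 - P * Pᴴ) *ᵥ x = (-1 : ℂ) • (1 - P * Pᴴ) *ᵥ (P *ᵥ y - x) := by
    rw [mulVec_sub, mulVec_mulVec, h0, zero_mulVec, zero_sub, neg_smul, one_smul, neg_neg]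
  rw [h, vnorm_smul, norm_neg, norm_one, one_mul]
  exact vnorm_sub_projection_le hP _

theorem sqrt_eigenvalues_le_sval_zero {m n : ℕ} (M : Matrix (Fin m) (Fin n) ℂ) (i : Fin n) :
    √((isHermitian_conjTranspose_mul_self M).eigenvalues i) ≤ sval M 0 := by
  unfold sval
  set l := (List.ofFn (isHermitian_conjTranspose_mul_self M).eigenvalues).map Real.sqrt with hl
  have hmem : √((isHermitian_conjTranspose_mul_self M).eigenvalues i)
      ∈ l.insertionSort (· ≥ ·) := by
    rw [List.mem_insertionSort, hl]
    exact List.mem_map_of_mem (List.mem_ofFn.2 ⟨i, rfl⟩)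
  have hsort := List.pairwise_insertionSort (· ≥ ·) l
  generalize l.insertionSort (· ≥ ·) = l' at hmem hsort
  cases l' with
  | nil => simp at hmem
  | cons c t =>
    rcases List.mem_cons.1 hmem with h | h
    · simp [h]
    · simpa using (List.pairwise_cons.1 hsort).1 _ h

/-- Every column of a matrix has Euclidean norm at most the largest singular value. -/
theorem vnorm_col_le_sval_zero {m n : ℕ} (M : Matrix (Fin m) (Fin n) ℂ) (j : Fin n) :
    vnorm (fun i => M i j) ≤ sval M 0 := by
  set hM := isHermitian_conjTranspose_mul_self M
  have h0 : 0 ≤ sval M 0 := (Real.sqrt_nonneg _).trans (sqrt_eigenvalues_le_sval_zero M j)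
  set W : Matrix (Fin n) (Fin n) ℂ := (hM.eigenvectorUnitary : Matrix (Fin n) (Fin n) ℂ)
  have hWW : W * Wᴴ = 1 := Unitary.mul_star_self_of_mem hM.eigenvectorUnitary.2
  have hdiag : vnorm (fun i => M i j) ^ 2 = ∑ i, hM.eigenvalues i * ‖W j i‖ ^ 2 := by
    apply Complex.ofReal_injective
    rw [ofReal_vnorm_sq]
    have h1 : star (fun i => M i j) ⬝ᵥ (fun i => M i j) = (Mᴴ * M) j j := by
      simp [Matrix.mul_apply, dotProduct]
    have hspec : Mᴴ * M = W * diagonal (RCLike.ofReal ∘ hM.eigenvalues) * Wᴴ := by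
      have := hM.spectral_theorem
      rw [Unitary.conjStarAlgAut_apply] at this
      exact this
    rw [h1]
    refine (congrFun (congrFun hspec j) j).trans ?_
    rw [Matrix.mul_apply]
    push_cast
    refine Finset.sum_congr rfl fun i _ => ?_
    rw [mul_diagonal, conjTranspose_apply, ← Complex.mul_conj', RCLike.star_def]
    change W j i * (hM.eigenvalues i : ℂ) * _ = _
    ring
  have hrow : ∑ i, ‖W j i‖ ^ 2 = 1 := by
    apply Complex.ofReal_injective
    have := congrFun (congrFun hWW j) j
    rw [Matrix.mul_apply, one_apply_eq] at this
    push_cast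
    rw [← this]
    refine Finset.sum_congr rfl fun i _ => ?_
    rw [conjTranspose_apply, ← Complex.mul_conj', RCLike.star_def]
  refine (sq_le_sq₀ (vnorm_nonneg _) h0).1 ?_
  rw [hdiag, ← mul_one (sval M 0 ^ 2), ← hrow, Finset.mul_sum]
  refine Finset.sum_le_sum fun i _ => mul_le_mul_of_nonneg_right ?_ (sq_nonneg _)
  exact (Real.sqrt_le_left h0).1 (sqrt_eigenvalues_le_sval_zero M i)

theorem conjTranspose_diagRect (σ : ℕ → ℝ) (a b : ℕ) :
    (diagRect σ 0 a b)ᴴ = diagRect σ 0 b a := by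
  ext i j
  by_cases h : (i : ℕ) = j
  · simp [diagRect, h]
  · simp [diagRect, h, Ne.symm h]

theorem diagRect_mulVec_apply (σ : ℕ → ℝ) (a b : ℕ) (w : Fin b → ℂ) (i : Fin a) :
    (diagRect σ 0 a b *ᵥ w) i = if h : (i : ℕ) < b then (σ i : ℂ) * w ⟨i, h⟩ else 0 := by
  simp only [mulVec, dotProduct, diagRect, of_apply, zero_add]
  split_ifs with h
  · rw [Finset.sum_eq_single ⟨i, h⟩]
    · simp
    · intro c _ hc
      rw [if_neg (fun h' => hc (Fin.ext h'.symm)), zero_mul]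
    · simp
  · refine Finset.sum_eq_zero fun c _ => ?_
    rw [if_neg (by have := c.2; omega), zero_mul]

/-- A nonincreasing rectangular diagonal matrix contracts by `σ k` on vectors whose first `k`
entries vanish, and the image has the same property. -/
theorem diagRect_mulVec_of_vanish {k a b : ℕ} {σ : ℕ → ℝ} (hσ0 : ∀ i, 0 ≤ σ i)
    (hσm : ∀ i j, i ≤ j → σ j ≤ σ i) {r : Fin b → ℂ} (hr : ∀ i : Fin b, (i : ℕ) < k → r i = 0) :
    (∀ i : Fin a, (i : ℕ) < k → (diagRect σ 0 a b *ᵥ r) i = 0) ∧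
      vnorm (diagRect σ 0 a b *ᵥ r) ≤ σ k * vnorm r := by
  refine ⟨fun i hi => ?_, ?_⟩
  · rw [diagRect_mulVec_apply]
    split_ifs with h
    · rw [hr _ hi, mul_zero]
    · rfl
  · refine (sq_le_sq₀ (vnorm_nonneg _) (mul_nonneg (hσ0 k) (vnorm_nonneg _))).1 ?_
    rw [mul_pow, vnorm_sq, vnorm_sq, Finset.mul_sum]
    set g : ℕ → ℝ := fun i => if h : i < b then σ k ^ 2 * ‖r ⟨i, h⟩‖ ^ 2 else 0 with hg
    have hg0 : ∀ i, 0 ≤ g i := fun i => by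
      simp only [hg]; split_ifs <;> positivity
    have hle : ∀ i : Fin a, ‖(diagRect σ 0 a b *ᵥ r) i‖ ^ 2 ≤ g i := fun i => by
      rw [diagRect_mulVec_apply]
      simp only [hg]
      split_ifs with h
      · rw [norm_mul, mul_pow, Complex.norm_real, Real.norm_of_nonneg (hσ0 _)]
        by_cases hik : (i : ℕ) < k
        · simp [hr ⟨i, h⟩ hik]
        · exact mul_le_mul_of_nonneg_right
            (pow_le_pow_left₀ (hσ0 _) (hσm _ _ (not_lt.1 hik)) 2) (sq_nonneg _)
      · simp
    have hb : ∑ i : Fin b, σ k ^ 2 * ‖r i‖ ^ 2 = ∑ i ∈ Finset.range b, g i := by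
      rw [Finset.sum_range]
      exact Finset.sum_congr rfl fun i _ => by simp [hg]
    calc ∑ i, ‖(diagRect σ 0 a b *ᵥ r) i‖ ^ 2 ≤ ∑ i : Fin a, g i :=
          Finset.sum_le_sum fun i _ => hle i
      _ = ∑ i ∈ Finset.range a, g i := (Finset.sum_range g).symm
      _ ≤ ∑ i ∈ Finset.range (max a b), g i :=
          Finset.sum_le_sum_of_subset_of_nonneg
            (Finset.range_mono (le_max_left a b)) fun i _ _ => hg0 i
      _ = ∑ i ∈ Finset.range b, g i := by
          refine (Finset.sum_subset (Finset.range_mono (le_max_right a b)) fun i _ hi => ?_).symm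
          simp only [hg]
          rw [dif_neg (by simpa using hi)]
      _ = _ := hb.symm

/-- `w` is `c` times the `j`-th unit vector plus a remainder of norm at most `t` whose first `k`
entries vanish. -/
def NearUnitVector {k a : ℕ} (j : Fin k) (c t : ℝ) (w : Fin (k + a) → ℂ) : Prop :=
  (∀ i : Fin (k + a), (i : ℕ) < k → (w - (c : ℂ) • Pi.single (Fin.castAdd a j) 1 : Fin (k + a) → ℂ) i = 0) ∧
    vnorm (w - (c : ℂ) • Pi.single (Fin.castAdd a j) 1) ≤ t

theorem diagRect_mulVec_single {k a b : ℕ} (σ : ℕ → ℝ) (j : Fin k) :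
    diagRect σ 0 (k + a) (k + b) *ᵥ Pi.single (Fin.castAdd b j) 1
      = (σ j : ℂ) • Pi.single (Fin.castAdd a j) 1 := by
  ext i
  rw [mulVec_single_one]
  simp only [col_apply, diagRect, of_apply, Fin.val_castAdd, zero_add, Pi.smul_apply, smul_eq_mul,
    Pi.single_apply, Fin.ext_iff]
  split_ifs with h
  · rw [h, mul_one]
  · rw [mul_zero]

theorem NearUnitVector.diagRect_mulVec {k a b : ℕ} {σ : ℕ → ℝ} (hσ0 : ∀ i, 0 ≤ σ i)
    (hσm : ∀ i j, i ≤ j → σ j ≤ σ i) {j : Fin k} {c t : ℝ} {w : Fin (k + b) → ℂ}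
    (hw : NearUnitVector j c t w) :
    NearUnitVector j (σ j * c) (σ k * t) (diagRect σ 0 (k + a) (k + b) *ᵥ w) := by
  have h : diagRect σ 0 (k + a) (k + b) *ᵥ w - ((σ j * c : ℝ) : ℂ) • Pi.single (Fin.castAdd a j) 1
      = diagRect σ 0 (k + a) (k + b) *ᵥ (w - (c : ℂ) • Pi.single (Fin.castAdd b j) 1) := by
    rw [mulVec_sub, mulVec_smul, diagRect_mulVec_single, smul_smul, Complex.ofReal_mul,
      mul_comm (c : ℂ)]
  obtain ⟨h1, h2⟩ := diagRect_mulVec_of_vanish (a := k + a) hσ0 hσm hw.1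
  unfold NearUnitVector
  rw [h]
  exact ⟨h1, h2.trans (mul_le_mul_of_nonneg_left hw.2 (hσ0 k))⟩

/-- Power iteration with a rectangular diagonal matrix `D`, applied as `(D * Dᴴ) ^ q * D`. -/
theorem NearUnitVector.diagRect_pow_mulVec {k a b : ℕ} {σ : ℕ → ℝ} (hσ0 : ∀ i, 0 ≤ σ i)
    (hσm : ∀ i j, i ≤ j → σ j ≤ σ i) {j : Fin k} {t : ℝ} {w : Fin (k + b) → ℂ}
    (hw : NearUnitVector j 1 t w) (q : ℕ) :
    NearUnitVector j (σ j ^ (2 * q + 1)) (σ k ^ (2 * q + 1) * t)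
      (((diagRect σ 0 (k + a) (k + b) * (diagRect σ 0 (k + a) (k + b))ᴴ) ^ q
        * diagRect σ 0 (k + a) (k + b)) *ᵥ w) := by
  induction q with
  | zero => simpa using hw.diagRect_mulVec (a := a) hσ0 hσm
  | succ q ih =>
    have h := (ih.diagRect_mulVec (a := b) hσ0 hσm).diagRect_mulVec (a := a) hσ0 hσm
    rw [mulVec_mulVec, mulVec_mulVec, ← Matrix.mul_assoc,
      ← conjTranspose_diagRect σ (k + a)] at h
    convert h using 1
    · ring
    · ring
    · rw [pow_succ']

/-- The sine bound: if the range of `P` contains `W *ᵥ w` with `W` unitary and `w` close to a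
multiple of a unit vector, then it is close to the corresponding column of `W`. -/
theorem NearUnitVector.vnorm_sub_projection_le {k a b : ℕ} {j : Fin k} {c t : ℝ}
    {w : Fin (k + a) → ℂ} (hw : NearUnitVector j c t w) (hc : 0 < c)
    {W : Matrix (Fin (k + a)) (Fin (k + a)) ℂ} (hW : Wᴴ * W = 1)
    {P : Matrix (Fin (k + a)) (Fin b) ℂ} (hP : Pᴴ * P = 1) {y : Fin b → ℂ}
    (hy : P *ᵥ y = W *ᵥ w) :
    vnorm ((1 - P * Pᴴ) *ᵥ (fun i => colsL W i j)) ≤ t / c := by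
  have hc' : (c : ℂ) ≠ 0 := Complex.ofReal_ne_zero.2 hc.ne'
  have hcol : (fun i => colsL W i j) = W *ᵥ Pi.single (Fin.castAdd a j) 1 := by
    rw [mulVec_single_one]; rfl
  have h : P *ᵥ ((c : ℂ)⁻¹ • y) - (fun i => colsL W i j)
      = (c : ℂ)⁻¹ • W *ᵥ (w - (c : ℂ) • Pi.single (Fin.castAdd a j) 1) := by
    rw [hcol, mulVec_smul, hy, mulVec_sub, mulVec_smul, smul_sub, smul_smul, inv_mul_cancel₀ hc',
      one_smul]
  refine (vnorm_sub_projection_le_sub hP _ ((c : ℂ)⁻¹ • y)).trans ?_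
  rw [h, vnorm_smul, vnorm_mulVec_of_conjTranspose_mul_self hW, norm_inv, Complex.norm_real,
    Real.norm_of_nonneg hc.le, inv_mul_eq_div]
  exact div_le_div_of_nonneg_right hw.2 hc.le

open scoped ComplexOrder in
theorem mul_rpinv_of_rank_eq {a b : ℕ} {M : Matrix (Fin a) (Fin b) ℂ} (hM : M.rank = a) :
    M * rpinv M = 1 := by
  have hrank : (M * Mᴴ).rank = Fintype.card (Fin a) := by
    rw [rank_self_mul_conjTranspose, hM, Fintype.card_fin]
  have hunit : IsUnit (M * Mᴴ) := by
    rw [← linearIndependent_cols_iff_isUnit, linearIndependent_iff_card_eq_finrank_span, ← hrank]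
    exact rank_eq_finrank_span_cols _
  rw [rpinv, ← Matrix.mul_assoc]
  exact mul_nonsing_inv _ ((isUnit_iff_isUnit_det _).1 hunit)

/-- The coordinates, in the basis of right singular vectors, of the starting guess normalised by
the pseudoinverse of its leading block. -/
theorem nearUnitVector_rpinv {k n₂ l : ℕ} (V : Matrix (Fin (k + n₂)) (Fin (k + n₂)) ℂ)
    (Ω : Matrix (Fin (k + n₂)) (Fin l) ℂ) (hΩ : ((colsL V)ᴴ * Ω).rank = k) (j : Fin k) :
    NearUnitVector j 1 (sval ((colsR V)ᴴ * Ω * rpinv ((colsL V)ᴴ * Ω)) 0)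
      ((Vᴴ * Ω * rpinv ((colsL V)ᴴ * Ω)) *ᵥ Pi.single j 1) := by
  set X := rpinv ((colsL V)ᴴ * Ω)
  have hX : (colsL V)ᴴ * Ω * X = 1 := mul_rpinv_of_rank_eq hΩ
  have hL (i : Fin k) : ((Vᴴ * Ω * X) *ᵥ Pi.single j 1 -
      ((1 : ℝ) : ℂ) • Pi.single (Fin.castAdd n₂ j) 1 : Fin (k + n₂) → ℂ) (Fin.castAdd n₂ i) = 0 := by
    have h : (Vᴴ * Ω * X) (Fin.castAdd n₂ i) j = ((colsL V)ᴴ * Ω * X) i j := rfl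
    rw [mulVec_single_one, Pi.sub_apply, col_apply, h, hX]
    simp [Pi.single_apply, one_apply]
  have hR (i : Fin n₂) : ((Vᴴ * Ω * X) *ᵥ Pi.single j 1 -
      ((1 : ℝ) : ℂ) • Pi.single (Fin.castAdd n₂ j) 1 : Fin (k + n₂) → ℂ) (Fin.natAdd k i)
        = ((colsR V)ᴴ * Ω * X) i j := by
    have h : (Vᴴ * Ω * X) (Fin.natAdd k i) j = ((colsR V)ᴴ * Ω * X) i j := rfl
    have hne : Fin.natAdd k i ≠ Fin.castAdd n₂ j := fun h => by
      have := congrArg Fin.val h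
      have := j.2
      simp at *
      omega
    rw [mulVec_single_one, Pi.sub_apply, col_apply, h]
    simp [hne]
  refine ⟨fun i hi => hL ⟨i, hi⟩, ?_⟩
  refine le_of_eq_of_le ?_ (vnorm_col_le_sval_zero _ j)
  unfold vnorm
  rw [Fin.sum_univ_add]
  simp only [hL, hR]
  simp

/-- The power iteration in terms of a singular value decomposition. -/
theorem mul_conjTranspose_pow_mul_of_svd {m n : ℕ} {A D : Matrix (Fin m) (Fin n) ℂ}
    {U : Matrix (Fin m) (Fin m) ℂ} {V : Matrix (Fin n) (Fin n) ℂ} (hU : Uᴴ * U = 1)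
    (hV : Vᴴ * V = 1) (hA : A = U * D * Vᴴ) (q : ℕ) :
    (A * Aᴴ) ^ q * A = U * ((D * Dᴴ) ^ q * D) * Vᴴ := by
  have hAA : A * Aᴴ * U = U * (D * Dᴴ) := by
    rw [hA]
    simp only [conjTranspose_mul, conjTranspose_conjTranspose, Matrix.mul_assoc, hU,
      Matrix.mul_one]
    rw [← Matrix.mul_assoc Vᴴ, hV, Matrix.one_mul]
  have hpow : (A * Aᴴ) ^ q * U = U * (D * Dᴴ) ^ q := by
    have h : SemiconjBy U (D * Dᴴ) (A * Aᴴ) := hAA.symm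
    exact (h.pow_right q).eq.symm
  calc (A * Aᴴ) ^ q * A = (A * Aᴴ) ^ q * U * D * Vᴴ := by
        nth_rewrite 3 [hA]; simp only [Matrix.mul_assoc]
    _ = _ := by rw [hpow]; simp only [Matrix.mul_assoc]

/-- Theorem 3.6, first part: angles between exact singular vectors and the
approximate singular subspaces. -/
theorem singular_vector_vs_subspace
    {k m₂ n₂ ρ : ℕ} (q : ℕ) (hk : 1 ≤ k)
    (A : Matrix (Fin (k + m₂)) (Fin (k + n₂)) ℂ)
    (U : Matrix (Fin (k + m₂)) (Fin (k + m₂)) ℂ)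
    (V : Matrix (Fin (k + n₂)) (Fin (k + n₂)) ℂ)
    (σ : ℕ → ℝ)
    (hU : Uᴴ * U = 1) (hU' : U * Uᴴ = 1)
    (hV : Vᴴ * V = 1) (hV' : V * Vᴴ = 1)
    (hσ0 : ∀ i, 0 ≤ σ i) (hσm : ∀ i j, i ≤ j → σ j ≤ σ i)
    (hA : A = U * diagRect σ 0 (k + m₂) (k + n₂) * Vᴴ)
    (hrank : 0 < σ (k - 1)) (hgap : σ k < σ (k - 1))
    (Ω : Matrix (Fin (k + n₂)) (Fin (k + ρ)) ℂ)
    (hΩ : ((colsL V)ᴴ * Ω).rank = k)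
    (Q : Matrix (Fin (k + m₂)) (Fin (k + ρ)) ℂ)
    (R : Matrix (Fin (k + ρ)) (Fin (k + ρ)) ℂ)
    (hQ : Qᴴ * Q = 1) (hR : R.BlockTriangular id)
    (hQR : (A * Aᴴ) ^ q * A * Ω = Q * R)
    (UB : Matrix (Fin (k + ρ)) (Fin (k + ρ)) ℂ)
    (Vh : Matrix (Fin (k + n₂)) (Fin (k + ρ)) ℂ)
    (σh : ℕ → ℝ)
    (hUB : UBᴴ * UB = 1) (hUB' : UB * UBᴴ = 1)
    (hVh : Vhᴴ * Vh = 1)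
    (hσh0 : ∀ i, 0 ≤ σh i) (hσhm : ∀ i j, i ≤ j → σh j ≤ σh i)
    (hB : Qᴴ * A = UB * diagRect σh 0 (k + ρ) (k + ρ) * Vhᴴ)
    :
    ∀ j : Fin k,
      vnorm ((1 - Q * UB * (Q * UB)ᴴ) *ᵥ (fun i => colsL U i j)) ≤
          (σ k / σ (j : ℕ)) ^ (2 * q + 1) * sval ((colsR V)ᴴ * Ω * rpinv ((colsL V)ᴴ * Ω)) 0 ∧
      vnorm ((1 - Vh * Vhᴴ) *ᵥ (fun i => colsL V i j)) ≤
          (σ k / σ (j : ℕ)) ^ (2 * q + 2) * sval ((colsR V)ᴴ * Ω * rpinv ((colsL V)ᴴ * Ω)) 0 := by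
  intro j
  have hσj : 0 < σ j := hrank.trans_le (hσm _ _ (by omega))
  set D := diagRect σ 0 (k + m₂) (k + n₂) with hD
  set X := rpinv ((colsL V)ᴴ * Ω)
  set s := sval ((colsR V)ᴴ * Ω * X) 0
  set w := (Vᴴ * Ω * X) *ᵥ Pi.single j 1 with hw
  have hnear : NearUnitVector j 1 s w := nearUnitVector_rpinv V Ω hΩ j
  have hz := hnear.diagRect_pow_mulVec (a := m₂) hσ0 hσm q
  rw [← hD] at hz
  set z := ((D * Dᴴ) ^ q * D) *ᵥ w with hzdef
  have hY : Q *ᵥ (R *ᵥ (X *ᵥ Pi.single j 1)) = U *ᵥ z := by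
    rw [mulVec_mulVec, ← hQR, mul_conjTranspose_pow_mul_of_svd hU hV hA q, hzdef, hw]
    simp only [mulVec_mulVec, Matrix.mul_assoc]
  constructor
  · have hP : (Q * UB)ᴴ * (Q * UB) = 1 := by
      rw [conjTranspose_mul, Matrix.mul_assoc, ← Matrix.mul_assoc Qᴴ, hQ, Matrix.one_mul, hUB]
    have hy : (Q * UB) *ᵥ (UBᴴ *ᵥ (R *ᵥ (X *ᵥ Pi.single j 1))) = U *ᵥ z := by
      rw [mulVec_mulVec, Matrix.mul_assoc, hUB', Matrix.mul_one, hY]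
    refine (hz.vnorm_sub_projection_le (pow_pos hσj _) hU hP hy).trans_eq ?_
    rw [div_pow, div_mul_eq_mul_div]
  · have hz' := hz.diagRect_mulVec (a := n₂) hσ0 hσm
    rw [← conjTranspose_diagRect, ← hD] at hz'
    have hAQ : Aᴴ * Q = Vh * ((diagRect σh 0 (k + ρ) (k + ρ))ᴴ * UBᴴ) := by
      simpa [Matrix.mul_assoc] using congrArg conjTranspose hB
    have hAU : Aᴴ * U = V * Dᴴ := by
      rw [hA]
      simp [Matrix.mul_assoc, hU]
    have hy : Vh *ᵥ (((diagRect σh 0 (k + ρ) (k + ρ))ᴴ * UBᴴ) *ᵥ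
        (R *ᵥ (X *ᵥ Pi.single j 1))) = V *ᵥ (Dᴴ *ᵥ z) := by
      rw [mulVec_mulVec, ← hAQ, ← mulVec_mulVec, hY, mulVec_mulVec, hAU, ← mulVec_mulVec]
    refine (hz'.vnorm_sub_projection_le (mul_pos hσj (pow_pos hσj _)) hV hVh hy).trans_eq ?_
    rw [div_pow, ← pow_succ', ← mul_assoc, ← pow_succ', div_mul_eq_mul_div]
end
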